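/- Left-wing Bäcklund transformations for the Wronskian supercharacters. For any fixed b ∈ B2 and f ∈ F2, writing B2′ = B2 with b removed and F2′ = F2 with f removed, the Wronskian supercharacters satisfy, for all a, s ∈ ℤ: (1) z_b·χ_{a+1,s}·χ^{B2′}_{a,s} − χ_{a,s}·χ^{B2′}_{a+1,s} = χ_{a+1,s+1}·χ^{B2′}_{a,s−1}; (2) χ_{a,s−1}·χ^{B2′}_{a,s} − χ_{a,s}·χ^{B2′}_{a,s−1} = χ_{a+1,s}·χ^{B2′}_{a−1,s−1}; (3) z_f·χ^{F2′}_{a+1,s}·χ_{a,s} + χ^{F2′}_{a,s}·χ_{a+1,s} = χ^{F2′}_{a+1,s+1}·χ_{a,s−1}; (4) χ^{F2′}_{a,s−1}·χ_{a,s} − χ^{F2′}_{a,s}·χ_{a,s−1} = −χ^{F2′}_{a+1,s}·χ_{a−1,s−1}. Here χ = χ^{B1,B2,F1,F2}, χ^{B2′} denotes the Wronskian supercharacter built with B2 replaced by B2′ (m2 decreased by 1, all other data unchanged), and χ^{F2′} that built with F2 replaced by F2′ (n2 decreased by 1). -/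

import Mathlib

open scoped BigOperators

namespace Stmt2

/-- The integer segment tuple `⟨a,b⟩ = (a, a+1, …, b)`, empty when `b < a`. -/
def seg (a b : ℤ) : List ℤ := (List.range (b - a + 1).toNat).map (fun k => a + (k : ℤ))

/-- Product of `g x y` over ordered pairs `x ≺ y` in the list `L`. -/
def pairProd {ι : Type*} (L : List ι) (g : ι → ι → ℂ) : ℂ :=
  ∏ i : Fin L.length, ∏ j : Fin L.length, if i < j then g (L.get i) (L.get j) else 1

/-- Product of `g x` over a list. -/
def prodL {ι : Type*} (L : List ι) (g : ι → ℂ) : ℂ := (L.map g).prod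

/-- Product of `g x y` over pairs `(x, y) ∈ L × M`. -/
def prodLL {ι : Type*} (L M : List ι) (g : ι → ι → ℂ) : ℂ :=
  (L.map (fun x => (M.map (g x)).prod)).prod

/-- Determinant of the square matrix whose rows and columns are labelled by the given
key lists (by convention `0` if the two lists have different lengths). -/
noncomputable def listDet {α β : Type*} (rows : List α) (cols : List β) (e : α → β → ℂ) : ℂ :=
  if h : rows.length = cols.length then
    Matrix.det (Matrix.of fun i j : Fin rows.length =>
      e (rows.get i) (cols.get (Fin.cast h j)))
  else 0

/-- The sparse determinant `Δ^{B1,B2,R,(η)}_{F,S,T1,T2}`. -/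
noncomputable def Delta {ι : Type*} (z : ι → ℂ) (B1 B2 F : List ι)
    (R S T1 T2 : List ℤ) (η : ℤ) : ℂ :=
  listDet
    ((B1.map (Sum.inl : ι → ι ⊕ (ι ⊕ ℤ)) ++
      B2.map (fun b => (Sum.inr (Sum.inl b) : ι ⊕ (ι ⊕ ℤ))) ++
      R.map (fun r => (Sum.inr (Sum.inr r) : ι ⊕ (ι ⊕ ℤ)))))
    ((F.map (Sum.inl : ι → ι ⊕ (ℤ ⊕ (ℤ ⊕ ℤ))) ++
      S.map (fun j => (Sum.inr (Sum.inl j) : ι ⊕ (ℤ ⊕ (ℤ ⊕ ℤ)))) ++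
      T1.map (fun j => (Sum.inr (Sum.inr (Sum.inl j)) : ι ⊕ (ℤ ⊕ (ℤ ⊕ ℤ)))) ++
      T2.map (fun j => (Sum.inr (Sum.inr (Sum.inr j)) : ι ⊕ (ℤ ⊕ (ℤ ⊕ ℤ))))))
    (fun row col =>
      match row, col with
      | Sum.inl b, Sum.inl f => 1 / (z b - z f)
      | Sum.inl b, Sum.inr (Sum.inl j) => z b ^ (j - 1)
      | Sum.inl b, Sum.inr (Sum.inr (Sum.inl j)) => z b ^ (j - 1)
      | Sum.inl _, Sum.inr (Sum.inr (Sum.inr _)) => 0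
      | Sum.inr (Sum.inl b), Sum.inl f => (-z f / z b) ^ η / (z b - z f)
      | Sum.inr (Sum.inl b), Sum.inr (Sum.inl j) => z b ^ (j - 1)
      | Sum.inr (Sum.inl _), Sum.inr (Sum.inr (Sum.inl _)) => 0
      | Sum.inr (Sum.inl b), Sum.inr (Sum.inr (Sum.inr j)) => z b ^ (j - 1)
      | Sum.inr (Sum.inr r), Sum.inl f => (-z f) ^ (r - 1)
      | Sum.inr (Sum.inr _), Sum.inr _ => 0)

/-- The denominator formula `D(B|F)`. -/
noncomputable def Dden {ι : Type*} (z : ι → ℂ) (B F : List ι) : ℂ :=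
  pairProd B (fun b b' => z b - z b') * pairProd F (fun f f' => z f' - z f) /
    prodLL B F (fun b f => z b - z f)

/-- `χ` is the Wronskian supercharacter family for the data `(z, B1, B2, F1, F2)`:
it vanishes outside the generalized T-hook and is given by the eight regional
sparse determinant formulas inside the hook. -/
def IsChi {ι : Type*} (z : ι → ℂ) (B1 B2 F1 F2 : List ι) (χ : ℤ → ℤ → ℂ) : Prop :=
  let m1 : ℤ := B1.length
  let m2 : ℤ := B2.length
  let n1 : ℤ := F1.length
  let n2 : ℤ := F2.length
  let η1 : ℤ := m1 - n1
  let η2 : ℤ := m2 - n2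
  let θ : ℤ := (m1 + m2) * (m1 + m2 - 1) / 2 + (n1 + n2) * (n1 + n2 - 1) / 2
  let F : List ι := F1 ++ F2
  let Dd : ℂ := Dden z (B1 ++ B2) F
  (∀ a s : ℤ, (a < 0 ∨ (m1 < a ∧ n1 < s) ∨ (m2 < a ∧ s < -n2)) → χ a s = 0) ∧
  (∀ a s : ℤ, s + η1 ≤ a → -s + η2 ≤ a → 0 ≤ a → -η1 ≤ s → s ≤ η2 →
    χ a s = (-1 : ℂ) ^ ((s + η1) * (s + n2) + θ) *
      Delta z B1 B2 F [] [] (seg 1 (s + η1)) (seg (s - a + η1 + 1) (-a + η1 + η2))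
        (a - s - η1) / Dd) ∧
  (∀ a s : ℤ, s + η1 ≤ a → -s + η2 ≤ a → 0 ≤ a → -η1 ≤ s → η2 ≤ s →
    χ a s = (-1 : ℂ) ^ ((s + η1) * (s + n2) + θ) *
      Delta z B1 B2 F (seg (a - s - η1 + 1) (a - η1 - η2)) [] (seg 1 (s + η1)) []
        (a - s - η1) / Dd) ∧
  (∀ a s : ℤ, s + η1 ≤ a → -s + η2 ≤ a → 0 ≤ a → s ≤ -η1 → s ≤ η2 →
    χ a s = (-1 : ℂ) ^ ((s + η1) * m2 + θ) *
      Delta z B1 B2 F (seg 1 (-s - η1)) [] [] (seg (s - a + η1 + 1) (-a + η1 + η2))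
        (a - s - η1) / Dd) ∧
  (∀ a s : ℤ, s + η1 ≤ a → -s + η2 ≤ a → 0 ≤ a → η2 ≤ s → s ≤ -η1 →
    χ a s = (-1 : ℂ) ^ ((s + η1) * m2 + θ) *
      Delta z B1 B2 F (seg 1 (-s - η1) ++ seg (a - s - η1 + 1) (a - η1 - η2)) [] [] []
        (a - s - η1) / Dd) ∧
  (∀ a s : ℤ, a ≤ s + η1 → a ≤ η1 + η2 →
    χ a s = (-1 : ℂ) ^ (a * m2 + θ) *
      Delta z B1 B2 F [] (seg 1 (-a + η1 + η2)) (seg (s - a + η1 + 1) (s + η1)) [] 0 / Dd) ∧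
  (∀ a s : ℤ, η1 + η2 ≤ a → a ≤ s + η1 →
    χ a s = (-1 : ℂ) ^ (a * (η1 + n2 + 1) + θ) *
      Delta z B1 B2 F (seg 1 (a - η1 - η2)) [] (seg (s - a + η1 + 1) (s + η1)) [] 0 / Dd) ∧
  (∀ a s : ℤ, a ≤ -s + η2 → a ≤ η1 + η2 →
    χ a s = (-1 : ℂ) ^ (a * (1 + m2) + θ) *
      Delta z B1 B2 F [] (seg 1 (-a + η1 + η2)) [] (seg (s - a + η1 + 1) (s + η1)) 0 / Dd) ∧
  (∀ a s : ℤ, η1 + η2 ≤ a → a ≤ -s + η2 →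
    χ a s = (-1 : ℂ) ^ (a * (η1 + n2) + θ) *
      Delta z B1 B2 F (seg 1 (a - η1 - η2)) [] [] (seg (s - a + η1 + 1) (s + η1)) 0 / Dd)


/-! ### Toolkit for determinants labelled by lists -/

section Toolkit

variable {ρ κ : Type*}

lemma listDet_eq {rows : List ρ} {cols : List κ} (e : ρ → κ → ℂ) (n : ℕ)
    (hr : rows.length = n) (hc : cols.length = n) :
    listDet rows cols e = Matrix.det (Matrix.of fun i j : Fin n =>
      e (rows[i.1]'(hr ▸ i.2)) (cols[j.1]'(hc ▸ j.2))) := by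
  subst hr
  unfold listDet
  rw [dif_pos hc.symm]
  rfl

lemma listDet_ne {rows : List ρ} {cols : List κ} (e : ρ → κ → ℂ)
    (h : rows.length ≠ cols.length) : listDet rows cols e = 0 := by
  unfold listDet
  rw [dif_neg h]

lemma listDet_transpose (rows : List ρ) (cols : List κ) (e : ρ → κ → ℂ) :
    listDet rows cols e = listDet cols rows (fun c r => e r c) := by
  by_cases h : rows.length = cols.length
  · rw [listDet_eq e _ h rfl, listDet_eq _ _ rfl h, ← Matrix.det_transpose]
    rfl
  · rw [listDet_ne _ h, listDet_ne _ (Ne.symm h)]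

lemma listDet_map {ρ' κ' : Type*} (rows : List ρ') (cols : List κ') (g : ρ' → ρ) (h : κ' → κ)
    (e : ρ → κ → ℂ) :
    listDet (rows.map g) (cols.map h) e = listDet rows cols (fun r c => e (g r) (h c)) := by
  by_cases hl : rows.length = cols.length
  · rw [listDet_eq e rows.length (by simp) (by simp [hl]), listDet_eq _ _ rfl hl.symm]
    simp
  · rw [listDet_ne _ hl, listDet_ne _ (by simpa using hl)]

lemma listDet_congr {rows : List ρ} {cols : List κ} {e e' : ρ → κ → ℂ}
    (h : ∀ r ∈ rows, ∀ c ∈ cols, e r c = e' r c) :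
    listDet rows cols e = listDet rows cols e' := by
  by_cases hl : rows.length = cols.length
  · rw [listDet_eq e _ rfl hl.symm, listDet_eq e' _ rfl hl.symm]
    congr 1
    ext i j
    simp only [Matrix.of_apply]
    exact h _ (List.getElem_mem _) _ (List.getElem_mem _)
  · rw [listDet_ne _ hl, listDet_ne _ hl]

lemma listDet_swap (A B : List ρ) (x y : ρ) (C : List κ) (e : ρ → κ → ℂ) :
    listDet (A ++ x :: y :: B) C e = - listDet (A ++ y :: x :: B) C e := by
  by_cases hl : A.length + (B.length + 2) = C.length
  · have h1 : (A ++ x :: y :: B).length = A.length + (B.length + 2) := by simp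
    have h2 : (A ++ y :: x :: B).length = A.length + (B.length + 2) := by simp
    rw [listDet_eq e _ h1 hl.symm, listDet_eq e _ h2 hl.symm]
    set i0 : Fin (A.length + (B.length + 2)) := ⟨A.length, by omega⟩ with hi0
    set i1 : Fin (A.length + (B.length + 2)) := ⟨A.length + 1, by omega⟩ with hi1
    have hne : i0 ≠ i1 := by simp [hi0, hi1]
    have := Matrix.det_permute (Equiv.swap i0 i1) (Matrix.of fun i j : Fin (A.length + (B.length + 2)) =>
      e ((A ++ y :: x :: B)[i.1]'(by rw [h2]; exact i.2)) (C[j.1]'(hl ▸ j.2)))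
    rw [Equiv.Perm.sign_swap hne] at this
    simp only [Units.val_neg, Units.val_one, Int.cast_neg, Int.cast_one, neg_mul, one_mul] at this
    rw [← this]
    congr 1
    ext i j
    simp only [Matrix.of_apply, Matrix.submatrix_apply, id]
    congr 1
    by_cases hi : i = i0
    · subst hi
      rw [Equiv.swap_apply_left]
      simp [hi0, hi1]
    · by_cases hi' : i = i1
      · subst hi'
        rw [Equiv.swap_apply_right]
        simp [hi0, hi1]
      · rw [Equiv.swap_apply_of_ne_of_ne hi hi']
        have e1 : i.1 ≠ A.length := fun h => hi (Fin.ext h)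
        have e2 : i.1 ≠ A.length + 1 := fun h => hi' (Fin.ext h)
        by_cases hlt : i.1 < A.length
        · simp [hlt]
        · obtain ⟨k, hk⟩ : ∃ k, i.1 = A.length + (k + 2) := ⟨i.1 - A.length - 2, by omega⟩
          simp [hk]
  · rw [listDet_ne _ (by simpa using hl), listDet_ne _ (by simpa using hl), neg_zero]

lemma listDet_move' (Q A B : List ρ) (x : ρ) (C : List κ) (e : ρ → κ → ℂ) :
    listDet (Q ++ (A ++ x :: B)) C e = (-1) ^ A.length * listDet (Q ++ x :: (A ++ B)) C e := by
  induction A generalizing Q with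
  | nil => simp
  | cons y A ih =>
    have := ih (Q ++ [y])
    simp only [List.append_assoc, List.cons_append, List.nil_append] at this ⊢
    rw [this, listDet_swap, List.length_cons, pow_succ]
    ring

lemma listDet_move (A B : List ρ) (x : ρ) (C : List κ) (e : ρ → κ → ℂ) :
    listDet (A ++ x :: B) C e = (-1) ^ A.length * listDet (x :: (A ++ B)) C e :=
  listDet_move' [] A B x C e

lemma listDet_block' (Q A X B : List ρ) (C : List κ) (e : ρ → κ → ℂ) :
    listDet (Q ++ (A ++ (X ++ B))) C e =
      (-1) ^ (A.length * X.length) * listDet (Q ++ (X ++ (A ++ B))) C e := by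
  induction X generalizing Q with
  | nil => simp
  | cons y X ih =>
    have := ih (Q ++ [y])
    simp only [List.append_assoc, List.cons_append, List.nil_append] at this ⊢
    rw [listDet_move', this, List.length_cons, Nat.mul_succ, pow_add]
    ring

lemma listDet_moveC' (R : List ρ) (Q A B : List κ) (x : κ) (e : ρ → κ → ℂ) :
    listDet R (Q ++ (A ++ x :: B)) e = (-1) ^ A.length * listDet R (Q ++ x :: (A ++ B)) e := by
  rw [listDet_transpose, listDet_move', listDet_transpose]

lemma listDet_moveC (R : List ρ) (A B : List κ) (x : κ) (e : ρ → κ → ℂ) :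
    listDet R (A ++ x :: B) e = (-1) ^ A.length * listDet R (x :: (A ++ B)) e :=
  listDet_moveC' R [] A B x e

lemma listDet_blockC' (R : List ρ) (Q A X B : List κ) (e : ρ → κ → ℂ) :
    listDet R (Q ++ (A ++ (X ++ B))) e =
      (-1) ^ (A.length * X.length) * listDet R (Q ++ (X ++ (A ++ B))) e := by
  rw [listDet_transpose, listDet_block', listDet_transpose]

lemma listDet_rev (A K B : List ρ) (C : List κ) (e : ρ → κ → ℂ) :
    listDet (A ++ (K.reverse ++ B)) C e =
      (-1) ^ (∑ i ∈ Finset.range K.length, i) * listDet (A ++ (K ++ B)) C e := by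
  induction K generalizing B with
  | nil => simp
  | cons k K ih =>
    have := ih (k :: B)
    simp only [List.reverse_cons, List.append_assoc, List.cons_append, List.nil_append,
      List.length_cons] at this ⊢
    rw [this, listDet_move', Finset.sum_range_succ, pow_add]
    ring

/-- Expansion along a first row which vanishes except at the first column. -/
lemma listDet_pivot (r : ρ) (A : List ρ) (c : κ) (C : List κ) (e : ρ → κ → ℂ)
    (h : ∀ y ∈ C, e r y = 0) :
    listDet (r :: A) (c :: C) e = e r c * listDet A C e := by
  by_cases hl : A.length = C.length
  · rw [listDet_eq e (A.length + 1) (by simp) (by simp [hl]), listDet_eq e _ rfl hl.symm,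
      Matrix.det_succ_row_zero, Finset.sum_eq_single 0]
    · simp
      left
      congr 1
    · intro j _ hj
      obtain ⟨k, rfl⟩ := Fin.exists_succ_eq.2 hj
      have : e r (C[k.1]'(by omega)) = 0 := h _ (List.getElem_mem _)
      simp [this]
    · simp
  · rw [listDet_ne _ hl, listDet_ne _ (by simpa using hl), mul_zero]

lemma listDet_rowop_front (r r' : ρ) (A : List ρ) (C : List κ) (e : ρ → κ → ℂ)
    (u : κ → ℂ) (hu : u ∈ Submodule.span ℂ (e '' {x | x ∈ A}))
    (h : ∀ y ∈ C, e r' y = e r y + u y) :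
    listDet (r' :: A) C e = listDet (r :: A) C e := by
  by_cases hl : A.length + 1 = C.length
  · have hs : e '' {x | x ∈ A} = Set.range (fun i : Fin A.length => e (A.get i)) := by
      ext v
      constructor
      · rintro ⟨x, hx, rfl⟩
        obtain ⟨i, hi⟩ := List.mem_iff_get.1 hx
        exact ⟨i, by simp [← hi]⟩
      · rintro ⟨i, rfl⟩
        exact ⟨A.get i, List.get_mem _ _, rfl⟩
    rw [hs] at hu
    obtain ⟨w, hw⟩ := (Submodule.mem_span_range_iff_exists_fun ℂ).1 hu
    rw [listDet_eq e (A.length + 1) (by simp) hl.symm, listDet_eq e (A.length + 1) (by simp) hl.symm]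
    set M : Matrix (Fin (A.length + 1)) (Fin (A.length + 1)) ℂ := Matrix.of fun i j =>
      e ((r :: A)[i.1]'(by have := i.2; simpa using this)) (C[j.1]'(hl ▸ j.2)) with hM
    have := Matrix.det_updateRow_sum M 0 (Fin.cons 1 w)
    simp only [Fin.cons_zero, one_smul] at this
    rw [← this]
    congr 1
    ext i j
    refine Fin.cases ?_ (fun i => ?_) i
    · simp only [Matrix.of_apply, Matrix.updateRow_self, Fin.sum_univ_succ, Fin.cons_zero,
        one_smul, Fin.cons_succ, Pi.add_apply, Finset.sum_apply, Pi.smul_apply]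
      rw [hM]
      have := h (C[j.1]'(hl ▸ j.2)) (List.getElem_mem _)
      simp only [Matrix.of_apply, Fin.val_zero, List.getElem_cons_zero, Fin.val_succ,
        List.getElem_cons_succ]
      rw [this, ← hw]
      simp
    · rw [Matrix.updateRow_ne (Fin.succ_ne_zero i)]
      simp [hM]
  · rw [listDet_ne _ (by simpa using hl), listDet_ne _ (by simpa using hl)]

lemma listDet_rowop {τ : Type*} (Q Z : List ρ) (K : List τ) (g g' : τ → ρ) (C : List κ)
    (e : ρ → κ → ℂ)
    (h : ∀ k ∈ K, ∃ u ∈ Submodule.span ℂ (e '' {x | x ∈ Q ∨ x ∈ Z}),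
      ∀ y ∈ C, e (g' k) y = e (g k) y + u y) :
    listDet (Q ++ (K.map g ++ Z)) C e = listDet (Q ++ (K.map g' ++ Z)) C e := by
  suffices H : ∀ (Q' : List ρ), (∀ x ∈ Q, x ∈ Q') →
      listDet (Q' ++ (K.map g ++ Z)) C e = listDet (Q' ++ (K.map g' ++ Z)) C e from
    H Q (fun _ hx => hx)
  induction K with
  | nil => simp
  | cons k K ih =>
    intro Q' hQ'
    have ih' := ih (fun k hk => h k (List.mem_cons_of_mem _ hk)) (Q' ++ [g k])
      (fun x hx => List.mem_append_left _ (hQ' x hx))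
    simp only [List.append_assoc, List.cons_append, List.nil_append, List.map_cons] at ih' ⊢
    rw [ih', listDet_move, listDet_move (x := g' k)]
    obtain ⟨u, hu, hy⟩ := h k List.mem_cons_self
    rw [listDet_rowop_front (g k) (g' k) _ C e u _ hy]
    refine Submodule.span_mono (Set.image_mono ?_) hu
    rintro x (hx | hx)
    · simp [hQ' x hx]
    · simp [hx]

lemma listDet_colop {τ : Type*} (R : List ρ) (Q Z : List κ) (K : List τ) (g g' : τ → κ)
    (e : ρ → κ → ℂ)
    (h : ∀ k ∈ K, ∃ u ∈ Submodule.span ℂ ((fun c r => e r c) '' {x | x ∈ Q ∨ x ∈ Z}),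
      ∀ y ∈ R, e y (g' k) = e y (g k) + u y) :
    listDet R (Q ++ (K.map g ++ Z)) e = listDet R (Q ++ (K.map g' ++ Z)) e := by
  rw [listDet_transpose, listDet_transpose R]
  exact listDet_rowop Q Z K g g' R (fun c r => e r c) h

/-- Elimination of a trailing block of unit rows. -/
lemma listDet_elim {τ : Type*} [DecidableEq τ] (A : List ρ) (C : List κ) (K : List τ)
    (hK : K.Nodup) (g : τ → ρ) (h : τ → κ) (e : ρ → κ → ℂ)
    (h1 : ∀ k ∈ K, ∀ l ∈ K, e (g k) (h l) = if k = l then 1 else 0)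
    (h2 : ∀ k ∈ K, ∀ y ∈ C, e (g k) y = 0) :
    listDet (A ++ K.map g) (C ++ K.map h) e = listDet A C e := by
  induction K generalizing A C with
  | nil => simp
  | cons k K ih =>
    have hk := List.nodup_cons.1 hK
    have := ih (A ++ [g k]) (C ++ [h k]) hk.2
      (fun a ha b hb => h1 a (List.mem_cons_of_mem _ ha) b (List.mem_cons_of_mem _ hb))
      (fun a ha y hy => by
        rcases List.mem_append.1 hy with hy | hy
        · exact h2 a (List.mem_cons_of_mem _ ha) y hy
        · rw [List.mem_singleton.1 hy, h1 a (List.mem_cons_of_mem _ ha) k List.mem_cons_self,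
            if_neg (fun (hh : a = k) => hk.1 (hh ▸ ha))])
    simp only [List.append_assoc, List.cons_append, List.nil_append] at this
    rw [List.map_cons, List.map_cons, this, listDet_move, listDet_moveC, List.append_nil,
      List.append_nil, listDet_pivot _ _ _ _ _ (h2 k List.mem_cons_self),
      h1 k List.mem_cons_self k List.mem_cons_self, if_pos rfl]
    by_cases hl : A.length = C.length
    · rw [hl, ← mul_assoc, ← pow_add, ← two_mul, pow_mul]
      simp
    · rw [listDet_ne _ hl]; simp

lemma listDet_scale (R : List ρ) (C : List κ) (e : ρ → κ → ℂ) (u : ρ → ℂ) :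
    listDet R C (fun r c => u r * e r c) = (R.map u).prod * listDet R C e := by
  by_cases hl : R.length = C.length
  · rw [listDet_eq _ _ rfl hl.symm, listDet_eq e _ rfl hl.symm]
    have : (R.map u).prod = ∏ i : Fin R.length, u (R[i.1]) := by
      rw [← List.prod_ofFn]
      congr 1
      apply List.ext_getElem <;> simp
    rw [this, ← Matrix.det_mul_column]
    rfl
  · rw [listDet_ne _ hl, listDet_ne _ hl, mul_zero]

lemma listDet_scaleC (R : List ρ) (C : List κ) (e : ρ → κ → ℂ) (u : κ → ℂ) :
    listDet R C (fun r c => u c * e r c) = (C.map u).prod * listDet R C e := by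
  rw [listDet_transpose, listDet_scale, listDet_transpose R]

end Toolkit

section Pluecker

variable {ρ κ : Type*}

/-- Three-term Pluecker relation (rows). -/
lemma listDet_P3 (p q r : ρ) (X : List ρ) (v : κ) (Y : List κ) (e : ρ → κ → ℂ) :
    listDet (p :: q :: X) (v :: Y) e * listDet (r :: X) Y e
      - listDet (p :: r :: X) (v :: Y) e * listDet (q :: X) Y e
      + listDet (q :: r :: X) (v :: Y) e * listDet (p :: X) Y e = 0 := by
  by_cases hl : X.length + 1 = Y.length
  swap
  · rw [listDet_ne (rows := r :: X) e (by simpa using hl),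
      listDet_ne (rows := q :: X) e (by simpa using hl),
      listDet_ne (rows := p :: X) e (by simpa using hl)]
    ring
  set k := X.length with hk
  have hsw : listDet (q :: r :: X) (v :: Y) e = - listDet (r :: q :: X) (v :: Y) e :=
    listDet_swap [] X q r (v :: Y) e
  rw [hsw]
  have hlY : (v :: Y).length = k + 2 := by simp; omega
  have hlen : ∀ a b : ρ, (a :: b :: X).length = k + 2 := by intro a b; simp [hk]
  rw [listDet_eq e (k + 2) (hlen _ _) hlY, listDet_eq e (k + 2) (hlen _ _) hlY,
    listDet_eq e (k + 2) (hlen _ _) hlY,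
    listDet_eq e (k + 1) (by simp [hk]) hl.symm, listDet_eq e (k + 1) (by simp [hk]) hl.symm,
    listDet_eq e (k + 1) (by simp [hk]) hl.symm]
  set M : Matrix (Fin (k + 2)) (Fin (k + 2)) ℂ := Matrix.of fun i j =>
    e ((p :: q :: X)[i.1]'(by rw [hlen]; exact i.2)) ((v :: Y)[j.1]'(by rw [hlY]; exact j.2)) with hM
  set w : Fin (k + 2) → ℂ := fun j => e r ((v :: Y)[j.1]'(by rw [hlY]; exact j.2)) with hw
  have h1 : (Matrix.of fun i j : Fin (k + 2) =>
      e ((p :: r :: X)[i.1]'(by rw [hlen]; exact i.2)) ((v :: Y)[j.1]'(by rw [hlY]; exact j.2)))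
      = M.updateRow 1 w := by
    ext i j
    refine Fin.cases ?_ (fun i => ?_) i
    · rw [Matrix.updateRow_ne (by simp)]; simp [hM]
    · refine Fin.cases ?_ (fun i => ?_) i
      · rw [Fin.succ_zero_eq_one, Matrix.updateRow_self]; simp [hw]
      · rw [Matrix.updateRow_ne (by simp [Fin.ext_iff])]; simp [hM]
  have h0 : (Matrix.of fun i j : Fin (k + 2) =>
      e ((r :: q :: X)[i.1]'(by rw [hlen]; exact i.2)) ((v :: Y)[j.1]'(by rw [hlY]; exact j.2)))
      = M.updateRow 0 w := by
    ext i j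
    refine Fin.cases ?_ (fun i => ?_) i
    · rw [Matrix.updateRow_self]; simp only [hw, Matrix.of_apply, Fin.val_zero, List.getElem_cons_zero]
    · rw [Matrix.updateRow_ne (Fin.succ_ne_zero i)]; simp only [hM, Matrix.of_apply, Fin.val_succ, List.getElem_cons_succ]
  rw [h1, h0]
  set N : Matrix (Fin (k + 1)) (Fin (k + 1)) ℂ := Matrix.of fun i j =>
    e ((p :: X)[i.1]'(by have := i.2; rw [List.length_cons]; omega)) (Y[j.1]'(by rw [← hl]; exact j.2)) with hN
  let φ : (Fin (k + 1) → ℂ) →ₗ[ℂ] ℂ :=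
    (Matrix.detRowAlternating (R := ℂ) (n := Fin (k + 1))).toMultilinearMap.toLinearMap N 0
  have hφ : ∀ u, φ u = (N.updateRow 0 u).det := fun u => rfl
  have hrow : ∀ a : ρ, (Matrix.of fun i j : Fin (k + 1) =>
      e ((a :: X)[i.1]'(by have := i.2; rw [List.length_cons]; omega)) (Y[j.1]'(by rw [← hl]; exact j.2))).det
      = φ (fun j => e a (Y[j.1]'(by rw [← hl]; exact j.2))) := by
    intro a
    rw [hφ]
    congr 1
    ext i j
    refine Fin.cases ?_ (fun i => ?_) i
    · rw [Matrix.updateRow_self]; simp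
    · rw [Matrix.updateRow_ne (by simp [Fin.ext_iff])]; simp [hN]
  have hX : ∀ i : Fin k, φ (fun j => e (X[i.1]) (Y[j.1]'(by rw [← hl]; exact j.2))) = 0 := by
    intro i
    rw [hφ]
    apply Matrix.det_zero_of_row_eq (i := 0) (j := i.succ) (by simp [Fin.ext_iff])
    rw [Matrix.updateRow_self, Matrix.updateRow_ne (by simp [Fin.ext_iff])]
    ext j
    simp [hN]
  rw [hrow r, hrow q, hrow p]
  have hc := Matrix.mulVec_cramer M.transpose w
  have hc' : (∑ i : Fin (k + 2), (M.updateRow i w).det •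
      (fun j : Fin (k + 1) => M i j.succ)) = M.det • fun j : Fin (k + 1) => w j.succ := by
    ext j
    have := congrFun hc j.succ
    simp only [Matrix.mulVec, dotProduct, Matrix.transpose_apply, Matrix.cramer_transpose_apply,
      Matrix.det_transpose] at this
    simp only [Finset.sum_apply, Pi.smul_apply, smul_eq_mul] at this ⊢
    rw [← this]
    exact Finset.sum_congr rfl fun i _ => mul_comm _ _
  have := congrArg φ hc'
  rw [map_sum, Fin.sum_univ_succ, Fin.sum_univ_succ] at this
  simp only [map_smul, smul_eq_mul] at this
  have hz : (∑ i : Fin k, (M.updateRow i.succ.succ w).det * φ (fun j => M i.succ.succ j.succ)) = 0 := by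
    apply Finset.sum_eq_zero
    intro i _
    have := hX i
    simp only [hM, Matrix.of_apply, Fin.val_succ, List.getElem_cons_succ, this, mul_zero]
  rw [hz] at this
  have f0 : (fun j : Fin (k + 1) => M 0 j.succ) =
      fun j => e p (Y[j.1]'(by rw [← hl]; exact j.2)) := rfl
  have f1 : (fun j : Fin (k + 1) => M 1 j.succ) =
      fun j => e q (Y[j.1]'(by rw [← hl]; exact j.2)) := rfl
  have f2 : (fun j : Fin (k + 1) => w j.succ) =
      fun j => e r (Y[j.1]'(by rw [← hl]; exact j.2)) := rfl
  rw [Fin.succ_zero_eq_one, f0, f1, f2] at this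
  linear_combination -this

lemma listDet_P3C (p q r : κ) (X : List κ) (v : ρ) (Y : List ρ) (e : ρ → κ → ℂ) :
    listDet (v :: Y) (p :: q :: X) e * listDet Y (r :: X) e
      - listDet (v :: Y) (p :: r :: X) e * listDet Y (q :: X) e
      + listDet (v :: Y) (q :: r :: X) e * listDet Y (p :: X) e = 0 := by
  have := listDet_P3 p q r X v Y (fun c r => e r c)
  simpa only [← listDet_transpose] using this

/-- Desnanot-Jacobi identity. -/
lemma listDet_DJ (p q : ρ) (X : List ρ) (u v : κ) (Y : List κ) (e : ρ → κ → ℂ) :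
    listDet (p :: q :: X) (u :: v :: Y) e * listDet X Y e
      = listDet (p :: X) (u :: Y) e * listDet (q :: X) (v :: Y) e
        - listDet (p :: X) (v :: Y) e * listDet (q :: X) (u :: Y) e := by
  let e' : Option ρ → Option κ → ℂ := fun r c =>
    match r, c with
    | none, none => 1
    | none, some _ => 0
    | some r, none => e r u
    | some r, some c => e r c
  have key := listDet_P3 (some p) (some q) none (X.map some) (some v) (none :: Y.map some) e'
  have hd : ∀ (A : List ρ) (C : List κ),
      listDet (A.map some) (none :: C.map some) e' = listDet A (u :: C) e := by
    intro A C
    have h1 : (none :: C.map some : List (Option κ)) =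
        (none :: C.map some : List (Option κ)).map id := by simp
    let g : Option κ → κ := fun c => c.getD u
    have h2 : (u :: C) = (none :: C.map some : List (Option κ)).map g := by
      simp [g, Function.comp_def]
    rw [h1, h2, listDet_map]
    conv_rhs => rw [← List.map_id A, listDet_map]
    apply listDet_congr
    intro r _ c _
    cases c <;> rfl
  have hn : ∀ (A : List ρ) (C : List κ),
      listDet (none :: A.map some) (none :: C.map some) e' = listDet A C e := by
    intro A C
    rw [listDet_pivot _ _ _ _ _ (by intro y hy; obtain ⟨c, _, rfl⟩ := List.mem_map.1 hy; rfl),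
      listDet_map]
    simp [e']
  have sw : ∀ a : ρ, listDet (some a :: none :: X.map some) (some v :: none :: Y.map some) e'
      = listDet (a :: X) (v :: Y) e := by
    intro a
    have := listDet_swap [] (X.map some) (some a) none (some v :: none :: Y.map some) e'
    simp only [List.nil_append] at this
    rw [this, listDet_transpose]
    have := listDet_swap [] (Y.map some) (some v) none (none :: some a :: X.map some)
      (fun c r => e' r c)
    simp only [List.nil_append] at this
    rw [this, ← listDet_transpose, neg_neg]
    exact hn (a :: X) (v :: Y)
  have sw2 : listDet (some p :: some q :: X.map some) (some v :: none :: Y.map some) e'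
      = - listDet (p :: q :: X) (u :: v :: Y) e := by
    rw [listDet_transpose]
    have := listDet_swap [] (Y.map some) (some v) none (some p :: some q :: X.map some)
      (fun c r => e' r c)
    simp only [List.nil_append] at this
    rw [this, ← listDet_transpose]
    exact congrArg Neg.neg (hd (p :: q :: X) (v :: Y))
  have hp := hd (p :: X) Y
  have hq := hd (q :: X) Y
  simp only [List.map_cons] at hp hq
  rw [sw p, sw q, sw2, hn X Y, hp, hq] at key
  linear_combination -key

end Pluecker

section Segments

lemma seg_eq (a b : ℤ) :
    seg a b = (List.range (b - a + 1).toNat).map (fun k : ℕ => a + (k : ℤ)) := by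
  unfold seg
  generalize List.range (b - a + 1).toNat = l
  induction l with
  | nil => rfl
  | cons x l ih => simpa using ih

lemma mem_seg {a b x : ℤ} : x ∈ seg a b ↔ a ≤ x ∧ x ≤ b := by
  rw [seg_eq]
  simp only [List.mem_map, List.mem_range]
  constructor
  · rintro ⟨k, hk, rfl⟩
    omega
  · rintro ⟨h1, h2⟩
    exact ⟨(x - a).toNat, by omega, by omega⟩

lemma seg_length (a b : ℤ) : (seg a b).length = (b - a + 1).toNat := by simp [seg_eq]

lemma seg_nodup (a b : ℤ) : (seg a b).Nodup := by
  rw [seg_eq]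
  refine List.Nodup.map ?_ List.nodup_range
  intro x y h
  simpa using h

lemma seg_nil {a b : ℤ} (h : b < a) : seg a b = [] := by
  apply List.length_eq_zero_iff.1
  rw [seg_length]
  omega

lemma seg_getElem (a b : ℤ) (i : ℕ) (h : i < (seg a b).length) : (seg a b)[i] = a + i := by
  simp [seg_eq]

lemma seg_append {a b c : ℤ} (h1 : a ≤ b + 1) (h2 : b ≤ c) :
    seg a c = seg a b ++ seg (b + 1) c := by
  apply List.ext_getElem
  · simp only [List.length_append, seg_length]
    omega
  · intro i h h'
    rw [List.getElem_append]
    split_ifs with hi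
    · rw [seg_getElem, seg_getElem]
    · rw [seg_getElem, seg_getElem]
      rw [seg_length] at hi ⊢
      omega

lemma seg_self (a : ℤ) : seg a a = [a] := by simp [seg_eq]

lemma seg_cons {a b : ℤ} (h : a ≤ b) : seg a b = a :: seg (a + 1) b := by
  rw [seg_append (b := a) (by omega) h, seg_self]
  rfl

lemma seg_snoc {a b : ℤ} (h : a ≤ b) : seg a b = seg a (b - 1) ++ [b] := by
  rw [seg_append (b := b - 1) (by omega) (by omega), sub_add_cancel, seg_self]

lemma seg_shift (a b : ℤ) : seg (a + 1) (b + 1) = (seg a b).map (fun x => x + 1) := by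
  apply List.ext_getElem
  · simp [seg_length]
  · intro i h h'
    simp only [List.getElem_map, seg_getElem]
    omega

lemma seg_rev (a b : ℤ) : (seg (1 - b) (1 - a)) = (seg a b).reverse.map (fun x => 1 - x) := by
  apply List.ext_getElem
  · simp [seg_length]
  · intro i h h'
    simp only [List.getElem_map, List.getElem_reverse, seg_getElem]
    rw [seg_length] at *
    omega

end Segments

section Signs

lemma sgn_congr {x y : ℤ} (h : ((x : ℤ) : ZMod 2) = (y : ZMod 2)) : (-1 : ℂ) ^ x = (-1 : ℂ) ^ y := by
  have h2 : (2 : ℤ) ∣ y - x := by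
    have := (ZMod.intCast_eq_intCast_iff_dvd_sub x y 2).1 h
    exact_mod_cast this
  obtain ⟨k, hk⟩ := h2
  have : y = x + 2 * k := by omega
  rw [this, zpow_add₀ (by norm_num), zpow_mul]
  norm_num

lemma sgn_add (x y : ℤ) : (-1 : ℂ) ^ (x + y) = (-1 : ℂ) ^ x * (-1 : ℂ) ^ y :=
  zpow_add₀ (by norm_num) _ _

lemma sgn_nat (n : ℕ) : (-1 : ℂ) ^ n = (-1 : ℂ) ^ (n : ℤ) := (zpow_natCast _ _).symm

lemma sgn_mul_self (x : ℤ) : (-1 : ℂ) ^ x * (-1 : ℂ) ^ x = 1 := by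
  rw [← sgn_add, ← two_mul, zpow_mul]
  norm_num

lemma sgn_ne (x : ℤ) : (-1 : ℂ) ^ x ≠ 0 := zpow_ne_zero _ (by norm_num)

end Signs

section Toolkit2

variable {ρ κ : Type*}

lemma listDet_W (X : List ρ) (Y : List κ) (g : ℤ → ρ) (h : ℤ → κ) (e : ρ → κ → ℂ) (p q L : ℤ)
    (hp : p ≤ L + 1) (hq : q ≤ L + 1)
    (h1 : ∀ i j, e (g i) (h j) = if i = j then 1 else 0)
    (h2 : ∀ i, p ≤ i → q ≤ i → ∀ y ∈ Y, e (g i) y = 0) :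
    listDet (X ++ (seg p L).map g) (Y ++ (seg q L).map h) e =
      listDet (X ++ (seg p (q - 1)).map g) (Y ++ (seg q (p - 1)).map h) e := by
  rcases le_total p q with hpq | hpq
  · rw [seg_append (a := p) (b := q - 1) (c := L) (by omega) (by omega), sub_add_cancel,
      List.map_append, ← List.append_assoc, seg_nil (a := q) (b := p - 1) (by omega),
      List.map_nil, List.append_nil]
    apply listDet_elim _ _ _ (seg_nodup _ _)
    · intro k _ l _; exact h1 k l
    · intro k hk y hy
      rw [mem_seg] at hk
      exact h2 k (by omega) (by omega) y hy
  · rw [seg_append (a := q) (b := p - 1) (c := L) (by omega) (by omega), sub_add_cancel,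
      List.map_append, ← List.append_assoc, seg_nil (a := p) (b := q - 1) (by omega),
      List.map_nil, List.append_nil]
    apply listDet_elim _ _ _ (seg_nodup _ _)
    · intro k _ l _; exact h1 k l
    · intro k hk y hy
      rw [mem_seg] at hk
      rcases List.mem_append.1 hy with hy | hy
      · exact h2 k (by omega) (by omega) y hy
      · obtain ⟨j, hj, rfl⟩ := List.mem_map.1 hy
        rw [mem_seg] at hj
        rw [h1, if_neg (by omega)]

lemma listDet_rescale_front (x x' : ρ) (A : List ρ) (C : List κ) (e : ρ → κ → ℂ) (c : ℂ)
    (h : ∀ y ∈ C, e x' y = c * e x y) :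
    listDet (x' :: A) C e = c * listDet (x :: A) C e := by
  let e' : Option ρ → κ → ℂ := fun o y => e (o.getD x) y
  let u : Option ρ → ℂ := fun o => match o with
    | none => c
    | some _ => 1
  have h1 := listDet_scale (none :: A.map some) C e' u
  have h2 : (x :: A) = (none :: A.map some : List (Option ρ)).map (fun o => o.getD x) := by
    simp [Function.comp_def]
  have h3 : (x' :: A) = (none :: A.map some : List (Option ρ)).map (fun o => o.getD x') := by
    simp [Function.comp_def]
  have h4 : listDet (x :: A) C e = listDet (none :: A.map some) C e' := by
    rw [h2]
    conv_lhs => rw [← List.map_id C, listDet_map]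
    rfl
  have h5 : listDet (x' :: A) C e =
      listDet (none :: A.map some) C (fun r y => u r * e' r y) := by
    rw [h3]
    conv_lhs => rw [← List.map_id C, listDet_map]
    apply listDet_congr
    intro r _ y hy
    cases r with
    | none => simpa [u, e'] using h y hy
    | some r => simp [u, e']
  rw [h5, h1, h4]
  simp [u, Function.comp_def]

lemma listDet_rescale {τ : Type*} (A B : List ρ) (K : List τ) (g g' : τ → ρ) (c : τ → ℂ)
    (C : List κ) (e : ρ → κ → ℂ) (h : ∀ k ∈ K, ∀ y ∈ C, e (g' k) y = c k * e (g k) y) :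
    listDet (A ++ (K.map g' ++ B)) C e = (K.map c).prod * listDet (A ++ (K.map g ++ B)) C e := by
  induction K generalizing A with
  | nil => simp
  | cons k K ih =>
    have ih' := ih (A ++ [g' k]) (fun k hk => h k (List.mem_cons_of_mem _ hk))
    simp only [List.append_assoc, List.cons_append, List.nil_append, List.map_cons,
      List.prod_cons] at ih' ⊢
    rw [ih', listDet_move, listDet_move (x := g k),
      listDet_rescale_front (g k) (g' k) _ C e (c k) (h k List.mem_cons_self)]
    ring

lemma listDet_revscale (A B : List ρ) (C : List κ) (e : ρ → κ → ℂ) (g g' : ℤ → ρ) (p q : ℤ)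
    (c : ℂ) (h : ∀ r ∈ seg p q, ∀ y ∈ C, e (g' r) y = (c * (-1) ^ (r - p)) * e (g r) y) :
    listDet (A ++ ((seg p q).map g' ++ B)) C e =
      c ^ (q - p + 1).toNat * listDet (A ++ ((seg p q).reverse.map g ++ B)) C e := by
  rw [listDet_rescale A B (seg p q) g g' _ C e h, List.map_reverse, listDet_rev, ← mul_assoc]
  congr 1
  have : ((seg p q).map (fun r => c * (-1 : ℂ) ^ (r - p))).prod =
      c ^ (q - p + 1).toNat * (-1) ^ (∑ i ∈ Finset.range (q - p + 1).toNat, i) := by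
    rw [seg_eq]
    generalize (q - p + 1).toNat = N
    induction N with
    | zero => simp
    | succ N ih =>
      rw [List.range_succ, List.map_append, List.map_append, List.prod_append, ih,
        Finset.sum_range_succ, pow_add, pow_succ]
      simp
      ring
  rw [this]
  simp [seg_length]

end Toolkit2

section Labels

lemma listDet_rescaleC {ρ κ τ : Type*} (R : List ρ) (A B : List κ) (K : List τ) (g g' : τ → κ)
    (c : τ → ℂ) (e : ρ → κ → ℂ) (h : ∀ k ∈ K, ∀ y ∈ R, e y (g' k) = c k * e y (g k)) :
    listDet R (A ++ (K.map g' ++ B)) e = (K.map c).prod * listDet R (A ++ (K.map g ++ B)) e := by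
  rw [listDet_transpose, listDet_transpose R]
  exact listDet_rescale A B K g g' c R (fun c r => e r c) h

/-- Row labels for the auxiliary determinants. -/
inductive RowL (ι : Type*) where
  | b1 (i : ι)
  | b2 (i : ι)
  | r1 (i : ℤ)
  | r2 (i : ℤ)
  | q (i : ℤ)
  | m (i : ℤ)
  | e0

/-- Column labels for the auxiliary determinants. -/
inductive ColL (ι : Type*) where
  | f (i : ι)
  | ft (η : ℤ) (i : ι)
  | p (i : ℤ)
  | d (i : ℤ)
  | t (i : ℤ)
  | nt (i : ℤ)
  | fs (i : ι)

open RowL ColL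

variable {ι : Type*}

/-- Matrix entries of the auxiliary determinants. -/
noncomputable def EE (z : ι → ℂ) : RowL ι → ColL ι → ℂ
  | b1 b, f x => 1 / (z b - z x)
  | b1 b, ft _ x => 1 / (z b - z x)
  | b1 b, p j => z b ^ (j - 1)
  | b1 _, d _ => 0
  | b1 b, t j => z b ^ (j - 1)
  | b2 b, f x => 1 / (z b - z x)
  | b2 b, ft η x => (z x / z b) ^ η / (z b - z x)
  | b2 b, p j => z b ^ (j - 1)
  | b2 b, d j => z b ^ (j - 1)
  | b2 _, t _ => 0
  | r1 i, f x => if i ≤ 0 then z x ^ (-i) else 0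
  | r1 i, ft _ x => if i ≤ 0 then z x ^ (-i) else 0
  | r1 i, p j => if i = j then 1 else 0
  | r1 _, d _ => 0
  | r1 i, t j => if i = j then 1 else 0
  | r2 i, f x => if i ≤ 0 then z x ^ (-i) else 0
  | r2 i, ft η x => if i ≤ -η then z x ^ (-i) else 0
  | r2 i, p j => if i = j then 1 else 0
  | r2 i, d j => if i = j then 1 else 0
  | r2 _, t _ => 0
  | q i, d j => if i = j then 1 else 0
  | q _, f _ => 0
  | q _, ft _ _ => 0
  | q _, p _ => 0
  | q _, t _ => 0
  | m r, f x => (-z x) ^ (r - 1)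
  | m r, ft _ x => (-z x) ^ (r - 1)
  | m _, p _ => 0
  | m _, d _ => 0
  | m _, t _ => 0
  | e0, f x => -1 / z x
  | e0, ft _ x => -1 / z x
  | e0, p j => if j = 1 then 1 else 0
  | e0, d _ => 0
  | e0, t _ => 0
  | b1 b, nt j => -z b ^ (j - 1)
  | b2 _, nt _ => 0
  | r1 i, nt j => if i = j then -1 else 0
  | r2 _, nt _ => 0
  | q _, nt _ => 0
  | m _, nt _ => 0
  | e0, nt _ => 0
  | b1 b, fs x => 1 / (z b - z x) + 1 / z x
  | b2 b, fs x => 1 / (z b - z x) + 1 / z x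
  | r1 _, fs _ => 0
  | r2 i, fs x => (if i ≤ 0 then z x ^ (-i) else 0) + (if i = 1 then 1 / z x else 0)
  | q _, fs _ => 0
  | m _, fs _ => 0
  | e0, fs _ => 0

/-- The uniform auxiliary determinant. -/
noncomputable def UU (z : ι → ℂ) (B1 B2 F : List ι) (c lo hi L : ℤ) : ℂ :=
  listDet (B1.map b1 ++ (B2.map b2 ++ (seg c L).map r2))
    (F.map f ++ ((seg lo hi).map d ++ (seg 1 L).map p)) (EE z)

lemma Delta_eq (z : ι → ℂ) (B1 B2 F : List ι) (R S T1 T2 : List ℤ) (η : ℤ)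
    (h : η = 0 ∨ S = []) :
    Delta z B1 B2 F R S T1 T2 η = (-1) ^ (η * (B2.length + T2.length)) *
      listDet (B1.map b1 ++ (B2.map b2 ++ R.map m))
        (F.map (ft η) ++ (S.map p ++ (T1.map t ++ T2.map d))) (EE z) := by
  let φ : ι ⊕ (ι ⊕ ℤ) → RowL ι := fun x => match x with
    | Sum.inl b => b1 b
    | Sum.inr (Sum.inl b) => b2 b
    | Sum.inr (Sum.inr r) => m r
  let ψ : ι ⊕ (ℤ ⊕ (ℤ ⊕ ℤ)) → ColL ι := fun x => match x with
    | Sum.inl b => ft η b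
    | Sum.inr (Sum.inl b) => p b
    | Sum.inr (Sum.inr (Sum.inl r)) => t r
    | Sum.inr (Sum.inr (Sum.inr r)) => d r
  let u : ι ⊕ (ι ⊕ ℤ) → ℂ := fun x => match x with
    | Sum.inl b => 1
    | Sum.inr (Sum.inl b) => (-1) ^ η
    | Sum.inr (Sum.inr r) => 1
  let v : ι ⊕ (ℤ ⊕ (ℤ ⊕ ℤ)) → ℂ := fun x => match x with
    | Sum.inl b => 1
    | Sum.inr (Sum.inl b) => 1
    | Sum.inr (Sum.inr (Sum.inl r)) => 1
    | Sum.inr (Sum.inr (Sum.inr r)) => (-1) ^ η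
  have hr : B1.map b1 ++ (B2.map b2 ++ R.map m) =
    (B1.map (Sum.inl : ι → ι ⊕ (ι ⊕ ℤ)) ++
      B2.map (fun b => (Sum.inr (Sum.inl b) : ι ⊕ (ι ⊕ ℤ))) ++
      R.map (fun r => (Sum.inr (Sum.inr r) : ι ⊕ (ι ⊕ ℤ)))).map φ := by
    simp [Function.comp_def, φ]
  have hc : F.map (ft η) ++ (S.map p ++ (T1.map t ++ T2.map d)) =
    (F.map (Sum.inl : ι → ι ⊕ (ℤ ⊕ (ℤ ⊕ ℤ))) ++
      S.map (fun j => (Sum.inr (Sum.inl j) : ι ⊕ (ℤ ⊕ (ℤ ⊕ ℤ)))) ++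
      T1.map (fun j => (Sum.inr (Sum.inr (Sum.inl j)) : ι ⊕ (ℤ ⊕ (ℤ ⊕ ℤ)))) ++
      T2.map (fun j => (Sum.inr (Sum.inr (Sum.inr j)) : ι ⊕ (ℤ ⊕ (ℤ ⊕ ℤ))))).map ψ := by
    simp [Function.comp_def, ψ]
  rw [hr, hc, listDet_map]
  have hs : (-1 : ℂ) ^ (η * (B2.length + T2.length)) =
    ((B1.map (Sum.inl : ι → ι ⊕ (ι ⊕ ℤ)) ++
      B2.map (fun b => (Sum.inr (Sum.inl b) : ι ⊕ (ι ⊕ ℤ))) ++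
      R.map (fun r => (Sum.inr (Sum.inr r) : ι ⊕ (ι ⊕ ℤ)))).map u).prod *
    ((F.map (Sum.inl : ι → ι ⊕ (ℤ ⊕ (ℤ ⊕ ℤ))) ++
      S.map (fun j => (Sum.inr (Sum.inl j) : ι ⊕ (ℤ ⊕ (ℤ ⊕ ℤ)))) ++
      T1.map (fun j => (Sum.inr (Sum.inr (Sum.inl j)) : ι ⊕ (ℤ ⊕ (ℤ ⊕ ℤ)))) ++
      T2.map (fun j => (Sum.inr (Sum.inr (Sum.inr j)) : ι ⊕ (ℤ ⊕ (ℤ ⊕ ℤ))))).map v).prod := by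
    simp [Function.comp_def, u, v]
    rw [zpow_mul, ← pow_add, ← zpow_natCast]
    push_cast
    rfl
  rw [hs, mul_assoc, ← listDet_scaleC, ← listDet_scale]
  unfold Delta
  apply listDet_congr
  have h1 : (-1 : ℂ) ^ η * (-1) ^ η = 1 := sgn_mul_self η
  intro r _ c hc'
  rcases r with r | r | r <;> rcases c with c | c | c | c <;> simp [u, v, φ, ψ, EE]
  · rw [neg_div, ← neg_one_mul, mul_zpow, mul_div_assoc]
  · rcases h with rfl | rfl
    · simp
    · simp at hc'
  · rw [← mul_assoc, h1, one_mul]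

lemma wing_core (z : ι → ℂ) (B1 B2 F : List ι) (β L : ℤ) (hL : 0 ≤ L) (hβ : -β ≤ L)
    (c : ℤ → ColL ι) (K : List ℤ) (h1 : ∀ i, 1 - β ≤ i → ∀ j ∈ K, EE z (r2 i) (c j) = 0)
    (h2 : ∀ i, ∀ j ∈ K, EE z (m i) (c j) = 0) :
    listDet (B1.map b1 ++ (B2.map b2 ++ (seg (1 - β) L).map r2))
      (F.map f ++ (K.map c ++ (seg 1 L).map p)) (EE z) =
    (-1) ^ ((K.length : ℤ) * max (-β) 0) * listDet (B1.map b1 ++ (B2.map b2 ++ (seg 1 β).map m))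
      (F.map (ft 0) ++ ((seg 1 (-β)).map p ++ K.map c)) (EE z) := by
  have s1 := listDet_colop (B1.map b1 ++ (B2.map b2 ++ (seg (1 - β) L).map r2)) []
    (K.map c ++ (seg 1 L).map p) F f (ft 0) (EE z) (by
      intro k _
      refine ⟨0, Submodule.zero_mem _, ?_⟩
      intro y hy
      simp only [List.mem_append, List.mem_map] at hy
      rcases hy with ⟨b, _, rfl⟩ | ⟨b, _, rfl⟩ | ⟨b, _, rfl⟩ <;> simp [EE])
  rw [List.nil_append, List.nil_append] at s1
  have s2 := listDet_W (B1.map b1 ++ B2.map b2) (F.map (ft 0) ++ K.map c) r2 p (EE z) (1 - β) 1 L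
    (by omega) (by omega) (by intro i j; simp [EE]) (by
      intro i hi hi' y hy
      simp only [List.mem_append, List.mem_map] at hy
      rcases hy with ⟨b, _, rfl⟩ | ⟨b, hb, rfl⟩
      · simp only [EE]
        rw [if_neg (by omega)]
      · exact h1 i hi b hb)
  simp only [List.append_assoc] at s2
  have s3 : seg (1 - β) (1 - 1) = (seg 1 β).reverse.map (fun x => 1 - x) := seg_rev 1 β
  rw [s1, s2, s3, show (1 - β - 1 : ℤ) = -β by ring, List.map_map]
  have s4 := listDet_revscale (B1.map b1 ++ B2.map b2) [] (F.map (ft 0) ++ (K.map c ++ (seg 1 (-β)).map p))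
    (EE z) ((r2 : ℤ → RowL ι) ∘ fun x => 1 - x) m 1 β 1 (by
      intro r hr y hy
      rw [mem_seg] at hr
      simp only [List.mem_append, List.mem_map] at hy
      rcases hy with ⟨b, _, rfl⟩ | ⟨j, hj, rfl⟩ | ⟨b, hb, rfl⟩
      · simp only [EE, Function.comp]
        rw [if_pos (by omega), one_mul, neg_sub, ← mul_zpow, neg_one_mul]
      · rw [h2 r j hj, Function.comp, h1 _ (by omega) j hj, mul_zero]
      · rw [mem_seg] at hb
        simp only [EE, Function.comp]
        rw [if_neg (by omega), mul_zero])
  simp only [List.append_nil, List.append_assoc, one_pow, one_mul] at s4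
  rw [← s4]
  have s5 := listDet_blockC' (B1.map b1 ++ (B2.map b2 ++ (seg 1 β).map m)) (F.map (ft 0)) (K.map c)
    ((seg 1 (-β)).map p) [] (EE z)
  simp only [List.append_nil] at s5
  rw [s5]
  congr 1
  rw [sgn_nat]
  congr 1
  simp only [List.length_map, seg_length]
  push_cast
  congr 1
  simp

lemma right_wing (z : ι → ℂ) (B1 B2 F : List ι) (β lo hi L : ℤ) (hL : 0 ≤ L) (hβ : -β ≤ L)
    (h1 : 1 ≤ lo) (h2 : lo ≤ hi + 1) (h3 : hi ≤ L) :
    UU z B1 B2 F (1 - β) lo hi L = (-1) ^ ((hi - lo + 1) * (1 + max (-β) 0)) *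
      Delta z B1 B2 F (seg 1 β) (seg 1 (-β)) (seg lo hi) [] 0 := by
  have hl : ((seg lo hi).length : ℤ) = hi - lo + 1 := by
    rw [seg_length]; omega
  rw [Delta_eq _ _ _ _ _ _ _ _ _ (Or.inl rfl)]
  have s0 := wing_core z B1 B2 F β L hL hβ nt (seg lo hi) (by intros; rfl) (by intros; rfl)
  unfold UU
  have s1 := listDet_colop (B1.map b1 ++ (B2.map b2 ++ (seg (1 - β) L).map r2)) (F.map f)
    ((seg 1 L).map p) (seg lo hi) d nt (EE z) (by
      intro k hk
      rw [mem_seg] at hk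
      refine ⟨-(fun c r => EE z r c) (p k), Submodule.neg_mem _ (Submodule.subset_span
        ⟨p k, Or.inr (List.mem_map.2 ⟨k, mem_seg.2 ⟨by omega, by omega⟩, rfl⟩), rfl⟩), ?_⟩
      intro y hy
      simp only [List.mem_append, List.mem_map] at hy
      rcases hy with ⟨b, _, rfl⟩ | ⟨b, _, rfl⟩ | ⟨b, _, rfl⟩ <;> simp [EE])
  rw [s1, s0]
  have s2 := listDet_rescaleC (B1.map b1 ++ (B2.map b2 ++ (seg 1 β).map m))
    (F.map (ft 0) ++ (seg 1 (-β)).map p) [] (seg lo hi) t nt (fun _ => -1) (EE z) (by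
      intro k _ y hy
      simp only [List.mem_append, List.mem_map] at hy
      rcases hy with ⟨b, _, rfl⟩ | ⟨b, _, rfl⟩ | ⟨b, _, rfl⟩ <;> simp [EE])
  simp only [List.append_nil, List.append_assoc, List.map_const', List.prod_replicate] at s2
  rw [s2, hl, sgn_nat, hl, mul_add, mul_one, sgn_add (hi - lo + 1) ((hi - lo + 1) * _)]
  simp only [zero_mul, zpow_zero, one_mul, List.map_nil, List.append_nil]
  generalize (-1 : ℂ) ^ (hi - lo + 1) = x1
  generalize (-1 : ℂ) ^ ((hi - lo + 1) * max (-β) 0) = x2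
  ring

lemma left_wing (z : ι → ℂ) (B1 B2 F : List ι) (β lo hi L : ℤ) (hL : 0 ≤ L) (hβ : -β ≤ L)
    (h1 : hi ≤ -β) (h2 : lo ≤ hi + 1) :
    UU z B1 B2 F (1 - β) lo hi L = (-1) ^ ((hi - lo + 1) * max (-β) 0) *
      Delta z B1 B2 F (seg 1 β) (seg 1 (-β)) [] (seg lo hi) 0 := by
  have hl : ((seg lo hi).length : ℤ) = hi - lo + 1 := by
    rw [seg_length]; omega
  rw [Delta_eq _ _ _ _ _ _ _ _ _ (Or.inl rfl)]
  have s0 := wing_core z B1 B2 F β L hL hβ d (seg lo hi) (by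
    intro i hi j hj
    rw [mem_seg] at hj
    simp only [EE]
    rw [if_neg (by omega)]) (by intros; rfl)
  unfold UU
  rw [s0, hl]
  simp

end Labels

section Central

open RowL ColL

variable {ι : Type*}

lemma seg_len_max (a b : ℤ) : ((seg a b).length : ℤ) = max (b - a + 1) 0 := by
  rw [seg_length]
  simp

lemma geo_sum (x y : ℂ) (hy : y ≠ 0) (hxy : y - x ≠ 0) (N : ℕ) :
    (x / y) ^ N / (y - x) =
      1 / (y - x) - ∑ j ∈ Finset.range N, x ^ j * y ^ (-(j : ℤ) - 1) := by
  induction N with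
  | zero => simp
  | succ N ih =>
    rw [Finset.sum_range_succ, ← sub_sub, ← ih, pow_succ, zpow_sub₀ hy, zpow_neg, zpow_natCast,
      div_pow]
    field_simp
    ring

lemma central_A (z : ι → ℂ) (B1 B2 F : List ι) (α β η L : ℤ) (hL : 0 ≤ L) (hα : -α ≤ L)
    (h1 : α ≤ β) (h2 : α ≤ η) :
    listDet (B1.map b1 ++ (B2.map b2 ++ ((seg (1 - α) L).map r1 ++ (seg (1 - β) L).map r2)))
      (F.map f ++ ((seg 1 L).map p ++ (seg (1 - η) L).map d)) (EE z) =
    (-1) ^ ((L + α) * (β - α) + L * (η - α)) * UU z B1 B2 F (1 - β) (1 - η) (-α) L := by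
  have e1 : seg (1 - β) L = seg (1 - β) (-α) ++ seg (1 - α) L := by
    rw [seg_append (b := -α) (by omega) (by omega)]
    congr 2
    ring
  have e2 : seg (1 - η) L = seg (1 - η) (-α) ++ seg (1 - α) L := by
    rw [seg_append (b := -α) (by omega) (by omega)]
    congr 2
    ring
  have s1 := listDet_rowop (B1.map b1 ++ (B2.map b2 ++ ((seg (1 - α) L).map r1 ++
      (seg (1 - β) (-α)).map r2))) [] (seg (1 - α) L) r2 q
      (F.map f ++ ((seg 1 L).map p ++ (seg (1 - η) L).map d)) (EE z) (by
    intro k hk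
    refine ⟨-EE z (r1 k), Submodule.neg_mem _ (Submodule.subset_span ⟨r1 k, Or.inl ?_, rfl⟩), ?_⟩
    · simp only [List.mem_append]
      exact Or.inr (Or.inr (Or.inl (List.mem_map.2 ⟨k, hk, rfl⟩)))
    · intro y hy
      simp only [List.mem_append, List.mem_map] at hy
      rcases hy with ⟨b, _, rfl⟩ | ⟨b, _, rfl⟩ | ⟨b, _, rfl⟩ <;> simp [EE])
  have s2 := listDet_elim (B1.map b1 ++ (B2.map b2 ++ ((seg (1 - α) L).map r1 ++
      (seg (1 - β) (-α)).map r2))) (F.map f ++ ((seg 1 L).map p ++ (seg (1 - η) (-α)).map d))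
      (seg (1 - α) L) (seg_nodup _ _) q d (EE z) (by intros; simp [EE]) (by
    intro k hk y hy
    rw [mem_seg] at hk
    simp only [List.mem_append, List.mem_map] at hy
    rcases hy with ⟨b, _, rfl⟩ | ⟨b, _, rfl⟩ | ⟨b, hb, rfl⟩
    · simp [EE]
    · simp [EE]
    · rw [mem_seg] at hb
      simp only [EE]
      rw [if_neg (by omega)])
  have s3 := listDet_block' (B1.map b1 ++ B2.map b2) ((seg (1 - α) L).map r1)
    ((seg (1 - β) (-α)).map r2) [] (F.map f ++ ((seg 1 L).map p ++ (seg (1 - η) (-α)).map d)) (EE z)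
  have s4 := listDet_blockC' (B1.map b1 ++ (B2.map b2 ++ ((seg (1 - β) (-α)).map r2 ++
      (seg (1 - α) L).map r1))) (F.map f) ((seg 1 L).map p) ((seg (1 - η) (-α)).map d) [] (EE z)
  have s5 := listDet_rowop (B1.map b1 ++ (B2.map b2 ++ (seg (1 - β) (-α)).map r2)) []
      (seg (1 - α) L) r1 r2 (F.map f ++ ((seg (1 - η) (-α)).map d ++ (seg 1 L).map p)) (EE z) (by
    intro k hk
    rw [mem_seg] at hk
    refine ⟨0, Submodule.zero_mem _, ?_⟩
    intro y hy
    simp only [List.mem_append, List.mem_map] at hy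
    rcases hy with ⟨b, _, rfl⟩ | ⟨b, hb, rfl⟩ | ⟨b, _, rfl⟩
    · simp [EE]
    · rw [mem_seg] at hb
      simp only [EE]
      rw [if_neg (by omega)]
      simp
    · simp [EE])
  simp only [List.append_assoc, List.append_nil] at s1 s2 s3 s4 s5
  unfold UU
  conv_lhs => rw [e1, List.map_append]
  rw [s1]
  conv_lhs => rw [e2, List.map_append]
  rw [s2, s3, s4, s5, e1, List.map_append, sgn_nat, sgn_nat, ← mul_assoc, ← sgn_add]
  congr 2
  simp only [List.length_map]
  push_cast
  simp only [seg_len_max]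
  rw [max_eq_left (by omega), max_eq_left (by omega), max_eq_left (by omega), max_eq_left (by omega)]
  ring

lemma central_B (z : ι → ℂ) (B1 B2 F : List ι) (α β η L : ℤ) (hL : 0 ≤ L) (hα : -α ≤ L)
    (hβ : -β ≤ L) (hη : 0 ≤ η)
    (hz : ∀ b ∈ B2, z b ≠ 0) (hzz : ∀ b ∈ B2, ∀ x ∈ F, z b - z x ≠ 0) :
    listDet (B1.map b1 ++ (B2.map b2 ++ ((seg (1 - α) L).map r1 ++ (seg (1 - β) L).map r2)))
      (F.map f ++ ((seg 1 L).map p ++ (seg (1 - η) L).map d)) (EE z) =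
    (-1) ^ ((L + α) * max (β - η) 0 + L * max (η - β) 0 + max α 0 * max (β - η) 0 +
        max (-α) 0 * max (η - β) 0) *
      listDet (B1.map b1 ++ (B2.map b2 ++ ((seg (1 - α) 0).map r1 ++ (seg (1 - β) (-η)).map r2)))
      (F.map (ft η) ++ ((seg 1 (-α)).map t ++ (seg (1 - η) (-β)).map d)) (EE z) := by
  have s1 := listDet_colop
    (B1.map b1 ++ (B2.map b2 ++ ((seg (1 - α) L).map r1 ++ (seg (1 - β) L).map r2)))
    (F.map f) ((seg (1 - η) L).map d) (seg 1 L) p t (EE z) (by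
      intro k hk
      rw [mem_seg] at hk
      refine ⟨-(fun c r => EE z r c) (d k), Submodule.neg_mem _ (Submodule.subset_span
        ⟨d k, Or.inr (List.mem_map.2 ⟨k, mem_seg.2 ⟨by omega, by omega⟩, rfl⟩), rfl⟩), ?_⟩
      intro y hy
      simp only [List.mem_append, List.mem_map] at hy
      rcases hy with ⟨b, _, rfl⟩ | ⟨b, _, rfl⟩ | ⟨b, _, rfl⟩ | ⟨b, _, rfl⟩ <;> simp [EE])
  have s2 := listDet_colop
    (B1.map b1 ++ (B2.map b2 ++ ((seg (1 - α) L).map r1 ++ (seg (1 - β) L).map r2)))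
    [] ((seg 1 L).map t ++ (seg (1 - η) L).map d) F f (ft η) (EE z) (by
      intro k hk
      refine ⟨-∑ j ∈ Finset.range η.toNat, (z k ^ j) • (fun c r => EE z r c) (d (-(j : ℤ))),
        Submodule.neg_mem _ (Submodule.sum_mem _ fun j hj => Submodule.smul_mem _ _
          (Submodule.subset_span ⟨d (-(j : ℤ)), Or.inr ?_, rfl⟩)), ?_⟩
      · rw [Finset.mem_range] at hj
        exact List.mem_append_right _ (List.mem_map.2 ⟨-(j : ℤ), mem_seg.2 ⟨by omega, by omega⟩, rfl⟩)
      · intro y hy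
        simp only [Pi.neg_apply, Finset.sum_apply, Pi.smul_apply, smul_eq_mul]
        simp only [List.mem_append, List.mem_map] at hy
        rcases hy with ⟨b, _, rfl⟩ | ⟨b, hb, rfl⟩ | ⟨b, _, rfl⟩ | ⟨b, _, rfl⟩
        · simp [EE]
        · simp only [EE]
          rw [← sub_eq_add_neg, ← geo_sum _ _ (hz b hb) (hzz b hb k hk), ← zpow_natCast,
            Int.toNat_of_nonneg hη]
        · simp [EE]
        · simp only [EE]
          by_cases hb : b ≤ -η
          · rw [if_pos hb, if_pos (by omega), Finset.sum_eq_zero]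
            · simp
            · intro j hj
              rw [Finset.mem_range] at hj
              rw [if_neg (by omega), mul_zero]
          · rw [if_neg hb]
            by_cases hb' : b ≤ 0
            · rw [if_pos hb', Finset.sum_eq_single (-b).toNat]
              · rw [if_pos (by omega), ← zpow_natCast, Int.toNat_of_nonneg (by omega)]
                ring
              · intro j _ hj
                rw [if_neg (by omega), mul_zero]
              · intro hj
                rw [Finset.mem_range] at hj
                omega
            · rw [if_neg hb', Finset.sum_eq_zero]
              · simp
              · intro j hj
                rw [if_neg (by omega), mul_zero])
  have s3 := listDet_W (B1.map b1 ++ (B2.map b2 ++ (seg (1 - α) L).map r1))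
    (F.map (ft η) ++ (seg 1 L).map t) r2 d (EE z) (1 - β) (1 - η) L
    (by omega) (by omega) (by intro i j; simp [EE]) (by
      intro i hi hi' y hy
      simp only [List.mem_append, List.mem_map] at hy
      rcases hy with ⟨b, _, rfl⟩ | ⟨b, hb, rfl⟩
      · simp only [EE]
        rw [if_neg (by omega)]
      · simp [EE])
  rw [show 1 - η - 1 = -η by ring, show 1 - β - 1 = -β by ring] at s3
  have s4 := listDet_block' (B1.map b1 ++ B2.map b2) ((seg (1 - α) L).map r1)
    ((seg (1 - β) (-η)).map r2) [] (F.map (ft η) ++ ((seg 1 L).map t ++ (seg (1 - η) (-β)).map d))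
    (EE z)
  have s5 := listDet_blockC' (B1.map b1 ++ (B2.map b2 ++ ((seg (1 - β) (-η)).map r2 ++
    (seg (1 - α) L).map r1))) (F.map (ft η)) ((seg 1 L).map t) ((seg (1 - η) (-β)).map d) [] (EE z)
  have s6 := listDet_W (B1.map b1 ++ (B2.map b2 ++ (seg (1 - β) (-η)).map r2))
    (F.map (ft η) ++ (seg (1 - η) (-β)).map d) r1 t (EE z) (1 - α) 1 L
    (by omega) (by omega) (by intro i j; simp [EE]) (by
      intro i hi hi' y hy
      simp only [List.mem_append, List.mem_map] at hy
      rcases hy with ⟨b, _, rfl⟩ | ⟨b, hb, rfl⟩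
      · simp only [EE]
        rw [if_neg (by omega)]
      · simp [EE])
  rw [show (1 : ℤ) - 1 = 0 by ring, show 1 - α - 1 = -α by ring] at s6
  have s7 := listDet_block' (B1.map b1 ++ B2.map b2) ((seg (1 - β) (-η)).map r2)
    ((seg (1 - α) 0).map r1) [] (F.map (ft η) ++ ((seg (1 - η) (-β)).map d ++ (seg 1 (-α)).map t))
    (EE z)
  have s8 := listDet_blockC' (B1.map b1 ++ (B2.map b2 ++ ((seg (1 - α) 0).map r1 ++
    (seg (1 - β) (-η)).map r2))) (F.map (ft η)) ((seg (1 - η) (-β)).map d)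
    ((seg 1 (-α)).map t) [] (EE z)
  simp only [List.append_assoc, List.append_nil, List.nil_append] at s1 s2 s3 s4 s5 s6 s7 s8
  rw [s1, s2, s3, s4, s5, s6, s7, s8]
  simp only [sgn_nat, ← mul_assoc, ← sgn_add]
  congr 2
  simp only [List.length_map]
  push_cast
  simp only [seg_len_max]
  rw [max_eq_left (a := L - (1 - α) + 1) (by omega), max_eq_left (a := L - 1 + 1) (by omega)]
  ring_nf

lemma central_C (z : ι → ℂ) (B1 B2 F : List ι) (α β η : ℤ) :
    listDet (B1.map b1 ++ (B2.map b2 ++ ((seg (1 - α) 0).map r1 ++ (seg (1 - β) (-η)).map r2)))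
      (F.map (ft η) ++ ((seg 1 (-α)).map t ++ (seg (1 - η) (-β)).map d)) (EE z) =
    (-1) ^ (η * max (β - η) 0 + η * (B2.length + max (η - β) 0)) *
      Delta z B1 B2 F (seg 1 α ++ seg (η + 1) β) [] (seg 1 (-α)) (seg (1 - η) (-β)) η := by
  rw [Delta_eq _ _ _ _ _ _ _ _ _ (Or.inr rfl)]
  have e1 : seg (1 - α) 0 = (seg 1 α).reverse.map (fun x => 1 - x) := seg_rev 1 α
  have e2 : seg (1 - β) (-η) = (seg (η + 1) β).reverse.map (fun x => 1 - x) := by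
    rw [← seg_rev]
    congr 1
    ring
  have s1 := listDet_revscale (B1.map b1 ++ B2.map b2) ((seg (η + 1) β).map m)
    (F.map (ft η) ++ ((seg 1 (-α)).map t ++ (seg (1 - η) (-β)).map d))
    (EE z) ((r1 : ℤ → RowL ι) ∘ fun x => 1 - x) m 1 α 1 (by
      intro r hr y hy
      rw [mem_seg] at hr
      simp only [List.mem_append, List.mem_map] at hy
      rcases hy with ⟨b, _, rfl⟩ | ⟨j, hj, rfl⟩ | ⟨b, hb, rfl⟩
      · simp only [EE, Function.comp]
        rw [if_pos (by omega), one_mul, neg_sub, ← mul_zpow, neg_one_mul]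
      · rw [mem_seg] at hj
        simp only [EE, Function.comp]
        rw [if_neg (by omega), mul_zero]
      · simp [EE])
  have s2 := listDet_revscale (B1.map b1 ++ (B2.map b2 ++
      (seg 1 α).reverse.map ((r1 : ℤ → RowL ι) ∘ fun x => 1 - x))) []
    (F.map (ft η) ++ ((seg 1 (-α)).map t ++ (seg (1 - η) (-β)).map d))
    (EE z) ((r2 : ℤ → RowL ι) ∘ fun x => 1 - x) m (η + 1) β ((-1) ^ η) (by
      intro r hr y hy
      rw [mem_seg] at hr
      simp only [List.mem_append, List.mem_map] at hy
      rcases hy with ⟨b, _, rfl⟩ | ⟨j, hj, rfl⟩ | ⟨b, hb, rfl⟩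
      · simp only [EE, Function.comp]
        rw [if_pos (by omega), ← sgn_add, neg_sub, show η + (r - (η + 1)) = r - 1 by ring,
          ← mul_zpow, neg_one_mul]
      · simp [EE]
      · rw [mem_seg] at hb
        simp only [EE, Function.comp]
        rw [if_neg (by omega), mul_zero])
  simp only [List.append_nil, List.append_assoc, one_pow, one_mul] at s1 s2
  rw [e1, e2, List.map_map, List.map_map, List.map_append]
  simp only [List.map_nil, List.nil_append]
  rw [s1, s2, ← zpow_natCast, ← zpow_mul, ← mul_assoc, ← mul_assoc, ← sgn_add, ← sgn_add]
  have : (-1 : ℂ) ^ (η * max (β - η) 0 + η * (B2.length + max (η - β) 0) +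
      η * (B2.length + ((seg (1 - η) (-β)).length : ℤ)) +
      η * ((β - (η + 1) + 1).toNat : ℤ)) = 1 := by
    rw [seg_len_max, Int.toNat_eq_max, show β - (η + 1) + 1 = β - η by ring,
      show -β - (1 - η) + 1 = η - β by ring]
    rw [show ∀ x y : ℤ, η * x + y + y + η * x = 2 * (η * x + y) by intros; ring, zpow_mul]
    norm_num
  rw [this, one_mul]

lemma central (z : ι → ℂ) (B1 B2 F : List ι) (α β η L : ℤ) (hL : 0 ≤ L) (hα : -α ≤ L)
    (hβ : -β ≤ L) (hη : 0 ≤ η) (h1 : α ≤ β) (h2 : α ≤ η)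
    (hz : ∀ b ∈ B2, z b ≠ 0) (hzz : ∀ b ∈ B2, ∀ x ∈ F, z b - z x ≠ 0) :
    UU z B1 B2 F (1 - β) (1 - η) (-α) L =
      (-1) ^ (((L + α) * (β - α) + L * (η - α)) +
        (((L + α) * max (β - η) 0 + L * max (η - β) 0 + max α 0 * max (β - η) 0 +
        max (-α) 0 * max (η - β) 0) +
        (η * max (β - η) 0 + η * (B2.length + max (η - β) 0)))) *
      Delta z B1 B2 F (seg 1 α ++ seg (η + 1) β) [] (seg 1 (-α)) (seg (1 - η) (-β)) η := by
  have hA := central_A z B1 B2 F α β η L hL hα h1 h2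
  rw [central_B z B1 B2 F α β η L hL hα hβ hη hz hzz, central_C] at hA
  rw [← mul_assoc, ← sgn_add] at hA
  rw [sgn_add ((L + α) * (β - α) + L * (η - α)) (_ + (_ + _)), mul_assoc, hA, ← mul_assoc,
    sgn_mul_self, one_mul]

end Central

section ChiEq

open RowL ColL

variable {ι : Type*}

lemma fin_aux (x y w : ℤ) (D D' Dd : ℂ) (hD : D = D')
    (h : ((x : ℤ) : ZMod 2) = ((y + w : ℤ) : ZMod 2)) :
    (-1 : ℂ) ^ x * D / Dd = (-1 : ℂ) ^ y * ((-1 : ℂ) ^ w * D') / Dd := by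
  rw [← mul_assoc, ← sgn_add, sgn_congr h, hD]

lemma chi_eq (z : ι → ℂ) (B1 B2 F1 F2 : List ι) (χ : ℤ → ℤ → ℂ) (hχ : IsChi z B1 B2 F1 F2 χ)
    (hz : ∀ b ∈ B2, z b ≠ 0) (hzz : ∀ b ∈ B2, ∀ x ∈ F1 ++ F2, z b - z x ≠ 0)
    (m1 m2 n1 n2 : ℤ) (hm1 : (B1.length : ℤ) = m1) (hm2 : (B2.length : ℤ) = m2)
    (hn1 : (F1.length : ℤ) = n1) (hn2 : (F2.length : ℤ) = n2)
    (a s L : ℤ) (ha : 0 ≤ a) (hL : 0 ≤ L) (hL1 : s + (m1 - n1) ≤ L)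
    (hL2 : m1 - n1 + (m2 - n2) - a ≤ L) :
    χ a s = (-1 : ℂ) ^ (((m1 + m2) * (m1 + m2 - 1) / 2 + (n1 + n2) * (n1 + n2 - 1) / 2) +
        a * (m1 + n1 + n2)) *
      UU z B1 B2 (F1 ++ F2) (1 + (m1 - n1 + (m2 - n2)) - a) (s + (m1 - n1) + 1 - a)
        (s + (m1 - n1)) L / Dden z (B1 ++ B2) (F1 ++ F2) := by
  obtain ⟨-, H1, H2, H3, H4, H5, H6, H7, H8⟩ := hχ
  simp only [hm1, hm2, hn1, hn2] at H1 H2 H3 H4 H5 H6 H7 H8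
  generalize ((m1 + m2) * (m1 + m2 - 1) / 2 + (n1 + n2) * (n1 + n2 - 1) / 2) = θ at *
  have c1 : 1 + (m1 - n1 + (m2 - n2)) - a = 1 - (a - (m1 - n1) - (m2 - n2)) := by ring
  rcases le_total a (s + (m1 - n1)) with hR | hR
  · rw [c1, right_wing z B1 B2 (F1 ++ F2) _ _ _ L hL (by omega) (by omega) (by omega) (by omega)]
    rcases le_total a (m1 - n1 + (m2 - n2)) with hE | hE
    · rw [H5 a s hR hE]
      apply fin_aux
      · rw [seg_nil (a := 1) (b := a - (m1 - n1) - (m2 - n2)) (by omega)]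
        congr 2 <;> ring
      · rw [max_eq_left (by omega)]
        push_cast
        generalize (m1 : ZMod 2) = m1
        generalize (m2 : ZMod 2) = m2
        generalize (n1 : ZMod 2) = n1
        generalize (n2 : ZMod 2) = n2
        generalize (a : ZMod 2) = a
        generalize (s : ZMod 2) = s
        generalize (θ : ZMod 2) = θ
        revert m1 m2 n1 n2 a s θ
        decide
    · rw [H6 a s hE hR]
      apply fin_aux
      · rw [seg_nil (a := 1) (b := -(a - (m1 - n1) - (m2 - n2))) (by omega)]
        congr 2 <;> ring
      · rw [max_eq_right (by omega)]
        push_cast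
        generalize (m1 : ZMod 2) = m1
        generalize (m2 : ZMod 2) = m2
        generalize (n1 : ZMod 2) = n1
        generalize (n2 : ZMod 2) = n2
        generalize (a : ZMod 2) = a
        generalize (s : ZMod 2) = s
        generalize (θ : ZMod 2) = θ
        revert m1 m2 n1 n2 a s θ
        decide
  rcases le_total a (-s + (m2 - n2)) with hR' | hR'
  · rw [c1, left_wing z B1 B2 (F1 ++ F2) _ _ _ L hL (by omega) (by omega) (by omega)]
    rcases le_total a (m1 - n1 + (m2 - n2)) with hE | hE
    · rw [H7 a s hR' hE]
      apply fin_aux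
      · rw [seg_nil (a := 1) (b := a - (m1 - n1) - (m2 - n2)) (by omega)]
        congr 2 <;> ring
      · rw [max_eq_left (by omega)]
        push_cast
        generalize (m1 : ZMod 2) = m1
        generalize (m2 : ZMod 2) = m2
        generalize (n1 : ZMod 2) = n1
        generalize (n2 : ZMod 2) = n2
        generalize (a : ZMod 2) = a
        generalize (s : ZMod 2) = s
        generalize (θ : ZMod 2) = θ
        revert m1 m2 n1 n2 a s θ
        decide
    · rw [H8 a s hE hR']
      apply fin_aux
      · rw [seg_nil (a := 1) (b := -(a - (m1 - n1) - (m2 - n2))) (by omega)]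
        congr 2 <;> ring
      · rw [max_eq_right (by omega)]
        push_cast
        generalize (m1 : ZMod 2) = m1
        generalize (m2 : ZMod 2) = m2
        generalize (n1 : ZMod 2) = n1
        generalize (n2 : ZMod 2) = n2
        generalize (a : ZMod 2) = a
        generalize (s : ZMod 2) = s
        generalize (θ : ZMod 2) = θ
        revert m1 m2 n1 n2 a s θ
        decide
  have c2 : s + (m1 - n1) + 1 - a = 1 - (a - s - (m1 - n1)) := by ring
  have c3 : UU z B1 B2 (F1 ++ F2) (1 - (a - (m1 - n1) - (m2 - n2))) (1 - (a - s - (m1 - n1)))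
      (s + (m1 - n1)) L = UU z B1 B2 (F1 ++ F2) (1 - (a - (m1 - n1) - (m2 - n2)))
      (1 - (a - s - (m1 - n1))) (-(-s - (m1 - n1))) L := by
    congr 1
    ring
  rw [c1, c2, c3, central z B1 B2 (F1 ++ F2) _ _ _ L hL (by omega) (by omega) (by omega) (by omega)
    (by omega) hz hzz, hm2]
  have hA : (-s - (m1 - n1) ≤ 0 ∧ -(m1 - n1) ≤ s) ∨ (0 ≤ -s - (m1 - n1) ∧ s ≤ -(m1 - n1)) := by omega
  have hB : (s ≤ m2 - n2 ∧ a - (m1 - n1) - (m2 - n2) ≤ a - s - (m1 - n1)) ∨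
    (m2 - n2 ≤ s ∧ a - s - (m1 - n1) ≤ a - (m1 - n1) - (m2 - n2)) := by omega
  rcases hA with ⟨hA, hA'⟩ | ⟨hA, hA'⟩ <;> rcases hB with ⟨hB, hB'⟩ | ⟨hB, hB'⟩
  · rw [H1 a s (by omega) (by omega) ha (by omega) (by omega)]
    apply fin_aux
    · rw [seg_nil (a := 1) (b := -s - (m1 - n1)) (by omega),
        seg_nil (b := a - (m1 - n1) - (m2 - n2)) (by omega), List.append_nil]
      congr 2 <;> ring
    · rw [max_eq_left (a := a - s - (m1 - n1) - _) (by omega),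
        max_eq_right (a := a - (m1 - n1) - (m2 - n2) - _) (by omega),
        max_eq_right (a := -s - (m1 - n1)) (by omega), max_eq_left (a := -(-s - (m1 - n1))) (by omega)]
      push_cast
      generalize (m1 : ZMod 2) = m1
      generalize (m2 : ZMod 2) = m2
      generalize (n1 : ZMod 2) = n1
      generalize (n2 : ZMod 2) = n2
      generalize (a : ZMod 2) = a
      generalize (s : ZMod 2) = s
      generalize (L : ZMod 2) = L
      rw [add_comm]
      rw [add_assoc]
      congr 1
      revert m1 m2 n1 n2 a s L
      decide
  · rw [H2 a s (by omega) (by omega) ha (by omega) (by omega)]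
    apply fin_aux
    · rw [seg_nil (a := 1) (b := -s - (m1 - n1)) (by omega),
        seg_nil (b := -(a - (m1 - n1) - (m2 - n2))) (by omega), List.nil_append]
      congr 2 <;> ring
    · rw [max_eq_right (a := a - s - (m1 - n1) - _) (by omega),
        max_eq_left (a := a - (m1 - n1) - (m2 - n2) - _) (by omega),
        max_eq_right (a := -s - (m1 - n1)) (by omega), max_eq_left (a := -(-s - (m1 - n1))) (by omega)]
      push_cast
      generalize (m1 : ZMod 2) = m1
      generalize (m2 : ZMod 2) = m2
      generalize (n1 : ZMod 2) = n1
      generalize (n2 : ZMod 2) = n2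
      generalize (a : ZMod 2) = a
      generalize (s : ZMod 2) = s
      generalize (L : ZMod 2) = L
      rw [add_comm]
      rw [add_assoc]
      congr 1
      revert m1 m2 n1 n2 a s L
      decide
  · rw [H3 a s (by omega) (by omega) ha (by omega) (by omega)]
    apply fin_aux
    · rw [seg_nil (a := 1) (b := -(-s - (m1 - n1))) (by omega),
        seg_nil (b := a - (m1 - n1) - (m2 - n2)) (by omega), List.append_nil]
      congr 2 <;> ring
    · rw [max_eq_left (a := a - s - (m1 - n1) - _) (by omega),
        max_eq_right (a := a - (m1 - n1) - (m2 - n2) - _) (by omega),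
        max_eq_left (a := -s - (m1 - n1)) (by omega), max_eq_right (a := -(-s - (m1 - n1))) (by omega)]
      push_cast
      generalize (m1 : ZMod 2) = m1
      generalize (m2 : ZMod 2) = m2
      generalize (n1 : ZMod 2) = n1
      generalize (n2 : ZMod 2) = n2
      generalize (a : ZMod 2) = a
      generalize (s : ZMod 2) = s
      generalize (L : ZMod 2) = L
      rw [add_comm]
      rw [add_assoc]
      congr 1
      revert m1 m2 n1 n2 a s L
      decide
  · rw [H4 a s (by omega) (by omega) ha (by omega) (by omega)]
    apply fin_aux
    · rw [seg_nil (a := 1) (b := -(-s - (m1 - n1))) (by omega),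
        seg_nil (b := -(a - (m1 - n1) - (m2 - n2))) (by omega)]
    · rw [max_eq_right (a := a - s - (m1 - n1) - _) (by omega),
        max_eq_left (a := a - (m1 - n1) - (m2 - n2) - _) (by omega),
        max_eq_left (a := -s - (m1 - n1)) (by omega), max_eq_right (a := -(-s - (m1 - n1))) (by omega)]
      push_cast
      generalize (m1 : ZMod 2) = m1
      generalize (m2 : ZMod 2) = m2
      generalize (n1 : ZMod 2) = n1
      generalize (n2 : ZMod 2) = n2
      generalize (a : ZMod 2) = a
      generalize (s : ZMod 2) = s
      generalize (L : ZMod 2) = L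
      rw [add_comm]
      rw [add_assoc]
      congr 1
      revert m1 m2 n1 n2 a s L
      decide

end ChiEq

section Shift

open RowL ColL

variable {ι : Type*}

/-- The auxiliary determinant with the extra row `e0`. -/
noncomputable def VV (z : ι → ℂ) (B1 B2 F : List ι) (c lo hi L : ℤ) : ℂ :=
  listDet (e0 :: (B1.map b1 ++ (B2.map b2 ++ (seg c L).map r2)))
    (F.map f ++ ((seg lo hi).map d ++ (seg 1 L).map p)) (EE z)

lemma shift (z : ι → ℂ) (B1 B2 F : List ι) (c lo hi L : ℤ) (hL : 0 ≤ L)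
    (hzb : ∀ b ∈ B1 ++ B2, z b ≠ 0) (hzf : ∀ x ∈ F, z x ≠ 0)
    (hzz : ∀ b ∈ B1 ++ B2, ∀ x ∈ F, z b - z x ≠ 0) :
    ((B1 ++ B2).map z).prod * UU z B1 B2 F c lo hi L =
      (F.map z).prod * ((-1) ^ (F.length + (seg lo hi).length) *
        VV z B1 B2 F (c + 1) (lo + 1) (hi + 1) (L + 1)) := by
  let u : RowL ι → ℂ := fun x => match x with
    | b1 b => z b
    | b2 b => z b
    | _ => 1
  let v : ColL ι → ℂ := fun x => match x with
    | f b => z b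
    | _ => 1
  let φ : RowL ι → RowL ι := fun x => match x with
    | r2 i => r2 (i + 1)
    | y => y
  let ψ : ColL ι → ColL ι := fun x => match x with
    | f i => fs i
    | d i => d (i + 1)
    | p i => p (i + 1)
    | y => y
  have s1 := listDet_scale (B1.map b1 ++ (B2.map b2 ++ (seg c L).map r2))
    (F.map f ++ ((seg lo hi).map d ++ (seg 1 L).map p)) (EE z) u
  have s2 := listDet_scaleC (B1.map b1 ++ (B2.map b2 ++ (seg c L).map r2))
    (F.map f ++ ((seg lo hi).map d ++ (seg 1 L).map p)) (fun r k => EE z (φ r) (ψ k)) v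
  have p1' : ((B1.map b1 ++ (B2.map b2 ++ (seg c L).map r2)).map u).prod =
      ((B1 ++ B2).map z).prod := by
    simp [Function.comp_def, u]
  have p2' : ((F.map f ++ ((seg lo hi).map d ++ (seg 1 L).map p)).map v).prod =
      (F.map z).prod := by
    simp [Function.comp_def, v]
  rw [p1'] at s1
  rw [p2', ← listDet_map] at s2
  unfold UU
  rw [← s1]
  have s3 : listDet (B1.map b1 ++ (B2.map b2 ++ (seg c L).map r2))
      (F.map f ++ ((seg lo hi).map d ++ (seg 1 L).map p)) (fun r k => u r * EE z r k) =
    listDet (B1.map b1 ++ (B2.map b2 ++ (seg c L).map r2))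
      (F.map f ++ ((seg lo hi).map d ++ (seg 1 L).map p)) (fun r k => v k * EE z (φ r) (ψ k)) := by
    apply listDet_congr
    intro r hr k hk
    simp only [List.mem_append, List.mem_map] at hr hk
    have hp : ∀ b ∈ B1 ++ B2, ∀ j : ℤ, z b * z b ^ (j - 1) = z b ^ j := by
      intro b hb j
      rw [zpow_sub_one₀ (hzb b hb)]
      field_simp [hzb b hb]
    have hq : ∀ b ∈ B1 ++ B2, ∀ x ∈ F, z b * (1 / (z b - z x)) =
        z x * (1 / (z b - z x) + 1 / z x) := by
      intro b hb x hx
      have h1 := hzz b hb x hx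
      have h2 := hzf x hx
      field_simp
      ring
    rcases hr with ⟨b, hb, rfl⟩ | ⟨b, hb, rfl⟩ | ⟨b, hb, rfl⟩ <;>
      rcases hk with ⟨x, hx, rfl⟩ | ⟨x, hx, rfl⟩ | ⟨x, hx, rfl⟩
    · exact hq b (List.mem_append_left _ hb) x hx
    · simp [u, v, φ, ψ, EE]
    · simpa [u, v, φ, ψ, EE] using hp b (List.mem_append_left _ hb) x
    · exact hq b (List.mem_append_right _ hb) x hx
    · simpa [u, v, φ, ψ, EE] using hp b (List.mem_append_right _ hb) x
    · simpa [u, v, φ, ψ, EE] using hp b (List.mem_append_right _ hb) x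
    · simp only [u, v, φ, ψ, EE]
      have h2 := hzf x hx
      rcases lt_trichotomy b 0 with h | h | h
      · rw [if_pos (by omega), if_pos (by omega), if_neg (by omega), neg_add, zpow_add₀ h2]
        field_simp
        simp
      · subst h
        simp
        field_simp
      · rw [if_neg (by omega), if_neg (by omega), if_neg (by omega)]
        simp
    · simp [u, v, φ, ψ, EE]
    · simp [u, v, φ, ψ, EE]
  rw [s3, s2]
  congr 1
  have hrow : (B1.map b1 ++ (B2.map b2 ++ (seg c L).map r2)).map φ =
      B1.map b1 ++ (B2.map b2 ++ (seg (c + 1) (L + 1)).map r2) := by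
    rw [seg_shift]
    simp [Function.comp_def, φ]
  have hcol : (F.map f ++ ((seg lo hi).map d ++ (seg 1 L).map p)).map ψ =
      F.map fs ++ ((seg (lo + 1) (hi + 1)).map d ++ (seg (1 + 1) (L + 1)).map p) := by
    rw [seg_shift, seg_shift]
    simp [Function.comp_def, ψ]
  rw [hrow, hcol]
  unfold VV
  have s4 := listDet_colop (e0 :: (B1.map b1 ++ (B2.map b2 ++ (seg (c + 1) (L + 1)).map r2)))
    [] ((seg (lo + 1) (hi + 1)).map d ++ (seg 1 (L + 1)).map p) F f fs (EE z) (by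
      intro k hk
      refine ⟨(1 / z k) • (fun c r => EE z r c) (p 1), Submodule.smul_mem _ _
          (Submodule.subset_span ⟨p 1, Or.inr ?_, rfl⟩), ?_⟩
      · exact List.mem_append_right _ (List.mem_map.2 ⟨1, mem_seg.2 ⟨by omega, by omega⟩, rfl⟩)
      · intro y hy
        simp only [List.mem_cons, List.mem_append, List.mem_map] at hy
        have h2 := hzf k hk
        rcases hy with rfl | ⟨b, hb, rfl⟩ | ⟨b, hb, rfl⟩ | ⟨b, hb, rfl⟩ <;> simp [EE]
        ring)
  simp only [List.nil_append] at s4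
  rw [s4, seg_cons (a := 1) (by omega), List.map_cons]
  simp only [← List.append_assoc]
  rw [listDet_moveC, listDet_pivot]
  · simp only [EE, if_true, one_mul, List.length_append, List.length_map, seg_length,
      ← mul_assoc, ← pow_add]
    rw [show hi + 1 - (lo + 1) + 1 = hi - lo + 1 by ring, ← two_mul (F.length + _), pow_mul]
    simp
  · intro y hy
    simp only [List.mem_append, List.mem_map] at hy
    rcases hy with (⟨b, hb, rfl⟩ | ⟨b, hb, rfl⟩) | ⟨b, hb, rfl⟩
    · simp [EE]
    · simp [EE]
    · rw [mem_seg] at hb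
      simp only [EE]
      rw [if_neg (by omega)]

end Shift

section Ids

open RowL ColL

variable {ι : Type*}

lemma row_b (z : ι → ℂ) (Q : List (RowL ι)) (B1 X2 Y2 : List ι) (b : ι) (Z : List (RowL ι))
    (C : List (ColL ι)) :
    listDet (Q ++ (B1.map b1 ++ ((X2 ++ b :: Y2).map b2 ++ Z))) C (EE z) =
      (-1) ^ (B1.length + X2.length) *
      listDet (Q ++ b2 b :: (B1.map b1 ++ ((X2 ++ Y2).map b2 ++ Z))) C (EE z) := by
  have := listDet_move' Q (B1.map b1 ++ X2.map b2) (Y2.map b2 ++ Z) (b2 b) C (EE z)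
  simpa using this

lemma row_R (z : ι → ℂ) (Q : List (RowL ι)) (B1 B2 : List ι) (e K : ℤ) (h : e ≤ K)
    (C : List (ColL ι)) :
    listDet (Q ++ (B1.map b1 ++ (B2.map b2 ++ (seg e K).map r2))) C (EE z) =
      (-1) ^ (B1.length + B2.length) *
      listDet (Q ++ r2 e :: (B1.map b1 ++ (B2.map b2 ++ (seg (e + 1) K).map r2))) C (EE z) := by
  have := listDet_move' Q (B1.map b1 ++ B2.map b2) ((seg (e + 1) K).map r2) (r2 e) C (EE z)
  rw [seg_cons h]
  simpa using this

lemma col_f (z : ι → ℂ) (R : List (RowL ι)) (P : List (ColL ι)) (X3 Y3 : List ι) (x : ι)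
    (Z : List (ColL ι)) :
    listDet R (P ++ ((X3 ++ x :: Y3).map f ++ Z)) (EE z) =
      (-1) ^ X3.length *
      listDet R (P ++ f x :: ((X3 ++ Y3).map f ++ Z)) (EE z) := by
  have := listDet_moveC' R P (X3.map f) (Y3.map f ++ Z) (f x) (EE z)
  simpa using this

lemma col_hi (z : ι → ℂ) (R : List (RowL ι)) (P : List (ColL ι)) (F : List ι) (lo h : ℤ)
    (hlo : lo ≤ h) (Z : List (ColL ι)) :
    listDet R (P ++ (F.map f ++ ((seg lo h).map d ++ Z))) (EE z) =
      (-1) ^ (F.length + (h - lo).toNat) *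
      listDet R (P ++ d h :: (F.map f ++ ((seg lo (h - 1)).map d ++ Z))) (EE z) := by
  have := listDet_moveC' R P (F.map f ++ (seg lo (h - 1)).map d) Z (d h) (EE z)
  rw [seg_snoc hlo]
  simp only [List.length_append, List.length_map, seg_length] at this
  rw [show h - 1 - lo + 1 = h - lo by ring] at this
  simpa using this

lemma col_lo (z : ι → ℂ) (R : List (RowL ι)) (P : List (ColL ι)) (F : List ι) (lo h : ℤ)
    (hlo : lo ≤ h) (Z : List (ColL ι)) :
    listDet R (P ++ (F.map f ++ ((seg lo h).map d ++ Z))) (EE z) =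
      (-1) ^ F.length *
      listDet R (P ++ d lo :: (F.map f ++ ((seg (lo + 1) h).map d ++ Z))) (EE z) := by
  have := listDet_moveC' R P (F.map f) ((seg (lo + 1) h).map d ++ Z) (d lo) (EE z)
  rw [seg_cons hlo]
  simpa using this

lemma alg1 {P PF σv σb σm w U1 U2' U3' A B C D E G : ℂ} (hP : P ≠ 0)
    (h1 : w * P * U1 = PF * (σv * (-1) * (σb * (σv * A))))
    (h2 : P * U2' = PF * (σv * (-1) * (σm * (σv * B))))
    (h3 : P * U3' = PF * (σv * C))
    (key : A * D - B * E + G * C = 0) :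
    w * U1 * (σm * D) - σb * E * U2' = σb * (σm * (σv * G)) * U3' := by
  apply mul_left_cancel₀ hP
  linear_combination (σm * D) * h1 - σb * E * h2 - σb * σm * σv * G * h3 -
    (PF * σv ^ 2 * σb * σm) * key

lemma id1 (z : ι → ℂ) (B1 X2 Y2 F : List ι) (b : ι) (e lo h L : ℤ) (hL : 0 ≤ L) (he : e ≤ L + 1)
    (hlo : lo ≤ h + 1)
    (hzb : ∀ b' ∈ B1 ++ (X2 ++ b :: Y2), z b' ≠ 0) (hzf : ∀ x ∈ F, z x ≠ 0)
    (hzz : ∀ b' ∈ B1 ++ (X2 ++ b :: Y2), ∀ x ∈ F, z b' - z x ≠ 0) :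
    z b * UU z B1 (X2 ++ b :: Y2) F e (lo - 1) h L * UU z B1 (X2 ++ Y2) F e lo h (L + 1) -
      UU z B1 (X2 ++ b :: Y2) F (e + 1) lo h (L + 1) * UU z B1 (X2 ++ Y2) F (e - 1) (lo - 1) h L =
      UU z B1 (X2 ++ b :: Y2) F e lo (h + 1) (L + 1) *
        UU z B1 (X2 ++ Y2) F e (lo - 1) (h - 1) L := by
  have hsub : ∀ b' ∈ B1 ++ (X2 ++ Y2), b' ∈ B1 ++ (X2 ++ b :: Y2) := by
    intro b' hb'
    simp only [List.mem_append, List.mem_cons] at hb' ⊢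
    tauto
  have h1 := shift z B1 (X2 ++ b :: Y2) F e (lo - 1) h L hL hzb hzf hzz
  have h2 := shift z B1 (X2 ++ Y2) F (e - 1) (lo - 1) h L hL (fun b' hb' => hzb b' (hsub b' hb'))
    hzf (fun b' hb' => hzz b' (hsub b' hb'))
  have h3 := shift z B1 (X2 ++ Y2) F e (lo - 1) (h - 1) L hL (fun b' hb' => hzb b' (hsub b' hb'))
    hzf (fun b' hb' => hzz b' (hsub b' hb'))
  rw [sub_add_cancel] at h1 h2 h3
  rw [sub_add_cancel] at h2 h3
  have hP : ((B1 ++ (X2 ++ b :: Y2)).map z).prod = z b * ((B1 ++ (X2 ++ Y2)).map z).prod := by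
    simp
    ring
  have hP0 : ((B1 ++ (X2 ++ Y2)).map z).prod ≠ 0 := by
    apply List.prod_ne_zero
    rw [List.mem_map]
    rintro ⟨b', hb', h0⟩
    exact hzb b' (hsub b' hb') h0
  rw [hP] at h1
  unfold VV at h1 h2 h3
  unfold UU at h1 h2 h3 ⊢
  have l1 : (seg (lo - 1) h).length = (h + 1 - lo).toNat + 1 := by
    rw [seg_length]; omega
  have l2 : (seg (lo - 1) (h - 1)).length = (h + 1 - lo).toNat := by
    rw [seg_length]; omega
  rw [l1] at h1 h2
  rw [l2] at h3
  have a1 := row_b z [e0] B1 X2 Y2 b ((seg (e + 1) (L + 1)).map r2)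
    (F.map f ++ ((seg lo (h + 1)).map d ++ (seg 1 (L + 1)).map p))
  have a1' := col_hi z (e0 :: b2 b :: (B1.map b1 ++ ((X2 ++ Y2).map b2 ++
    (seg (e + 1) (L + 1)).map r2))) [] F lo (h + 1) hlo ((seg 1 (L + 1)).map p)
  have a2 := row_R z [e0] B1 (X2 ++ Y2) e (L + 1) he
    (F.map f ++ ((seg lo (h + 1)).map d ++ (seg 1 (L + 1)).map p))
  have a2' := col_hi z (e0 :: r2 e :: (B1.map b1 ++ ((X2 ++ Y2).map b2 ++
    (seg (e + 1) (L + 1)).map r2))) [] F lo (h + 1) hlo ((seg 1 (L + 1)).map p)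
  have a4 := row_R z [] B1 (X2 ++ Y2) e (L + 1) he
    (F.map f ++ ((seg lo h).map d ++ (seg 1 (L + 1)).map p))
  have a5 := row_b z [] B1 X2 Y2 b ((seg (e + 1) (L + 1)).map r2)
    (F.map f ++ ((seg lo h).map d ++ (seg 1 (L + 1)).map p))
  have a6 := row_b z [] B1 X2 Y2 b ((seg e (L + 1)).map r2)
    (F.map f ++ ((seg lo (h + 1)).map d ++ (seg 1 (L + 1)).map p))
  have a6' := row_R z [b2 b] B1 (X2 ++ Y2) e (L + 1) he
    (F.map f ++ ((seg lo (h + 1)).map d ++ (seg 1 (L + 1)).map p))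
  have a6'' := col_hi z (b2 b :: r2 e :: (B1.map b1 ++ ((X2 ++ Y2).map b2 ++
    (seg (e + 1) (L + 1)).map r2))) [] F lo (h + 1) hlo ((seg 1 (L + 1)).map p)
  rw [add_sub_cancel_right] at a1' a2' a6''
  simp only [List.nil_append, List.cons_append] at a1 a1' a2 a2' a4 a5 a6 a6' a6''
  rw [a1, a1'] at h1
  rw [a2, a2'] at h2
  rw [a4, a5, a6, a6', a6'']
  have key := listDet_P3 e0 (b2 b) (r2 e) (B1.map b1 ++ ((X2 ++ Y2).map b2 ++
    (seg (e + 1) (L + 1)).map r2)) (d (h + 1)) (F.map f ++ ((seg lo h).map d ++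
    (seg 1 (L + 1)).map p)) (EE z)
  rw [← add_assoc, pow_succ] at h1 h2
  exact alg1 hP0 h1 h2 h3 key

lemma id2 (z : ι → ℂ) (B1 X2 Y2 F : List ι) (b : ι) (e lo h L : ℤ) (he : e ≤ L)
    (hlo : lo ≤ h) :
    UU z B1 (X2 ++ b :: Y2) F (e + 1) (lo - 1) (h - 1) L * UU z B1 (X2 ++ Y2) F e lo h L -
      UU z B1 (X2 ++ b :: Y2) F (e + 1) lo h L * UU z B1 (X2 ++ Y2) F e (lo - 1) (h - 1) L =
      UU z B1 (X2 ++ b :: Y2) F e (lo - 1) h L * UU z B1 (X2 ++ Y2) F (e + 1) lo (h - 1) L := by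
  unfold UU
  have rb : ∀ c C, listDet (B1.map b1 ++ ((X2 ++ b :: Y2).map b2 ++ (seg c L).map r2)) C (EE z) =
      (-1) ^ (B1.length + X2.length) *
      listDet (b2 b :: (B1.map b1 ++ ((X2 ++ Y2).map b2 ++ (seg c L).map r2))) C (EE z) :=
    fun c C => row_b z [] B1 X2 Y2 b ((seg c L).map r2) C
  have rR := fun C => row_R z [] B1 (X2 ++ Y2) e L he C
  have rR' := fun C => row_R z [b2 b] B1 (X2 ++ Y2) e L he C
  have ch := fun R => col_hi z R [] F lo h hlo ((seg 1 L).map p)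
  have cl := fun R => col_lo z R [] F (lo - 1) (h - 1) (by omega) ((seg 1 L).map p)
  have cl' := fun R => col_lo z R [] F (lo - 1) h (by omega) ((seg 1 L).map p)
  have ch' := fun R => col_hi z R [d (lo - 1)] F lo h hlo ((seg 1 L).map p)
  simp only [List.nil_append, List.cons_append, sub_add_cancel] at rR rR' ch cl cl' ch'
  simp only [rb, rR, rR', ch, cl, cl', ch']
  have key := listDet_DJ (b2 b) (r2 e) (B1.map b1 ++ ((X2 ++ Y2).map b2 ++
    (seg (e + 1) L).map r2)) (d (lo - 1)) (d h) (F.map f ++ ((seg lo (h - 1)).map d ++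
    (seg 1 L).map p)) (EE z)
  linear_combination (-((-1) ^ (B1.length + X2.length) * (-1) ^ (B1.length + (X2 ++ Y2).length) *
    (-1) ^ (F.length) * (-1) ^ (F.length + (h - lo).toNat))) * key

lemma alg3 {P PF σf σm w U1 U2 U3 A B C D E G : ℂ} {n N : ℕ} (hP : P ≠ 0)
    (h1 : P * U1 = PF * ((-1) ^ (n + (N + 1)) * ((-1) ^ (n + N) * A)))
    (h2 : P * U2 = w * PF * ((-1) ^ (n + 1 + (N + 1)) * (σf * (σm * ((-1) ^ (n + N) * B)))))
    (h3 : P * U3 = w * PF * ((-1) ^ (n + 1 + N) * (σf * C)))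
    (key : B * D = C * G - A * E) :
    w * U1 * (σf * (σm * E)) - D * U2 = σm * ((-1) ^ (n + N) * G) * U3 := by
  apply mul_left_cancel₀ hP
  rw [show n + (N + 1) = n + N + 1 by ring, pow_succ] at h1
  rw [show n + 1 + (N + 1) = n + N + 2 by ring, pow_add] at h2
  rw [show n + 1 + N = n + N + 1 by ring, pow_succ] at h3
  generalize (-1 : ℂ) ^ (n + N) = v at *
  linear_combination (w * σf * σm * E) * h1 - D * h2 - σm * v * G * h3 -
    (w * PF * v ^ 2 * σf * σm) * key

lemma id3 (z : ι → ℂ) (B1 B2 X3 Y3 : List ι) (x : ι) (e lo h L : ℤ) (hL : 0 ≤ L) (he : e ≤ L)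
    (hlo : lo ≤ h + 1)
    (hzb : ∀ b' ∈ B1 ++ B2, z b' ≠ 0) (hzf : ∀ y ∈ X3 ++ x :: Y3, z y ≠ 0)
    (hzz : ∀ b' ∈ B1 ++ B2, ∀ y ∈ X3 ++ x :: Y3, z b' - z y ≠ 0) :
    z x * UU z B1 B2 (X3 ++ Y3) (e + 1) (lo - 1) h L *
        UU z B1 B2 (X3 ++ x :: Y3) (e + 1) lo h (L + 1) -
      UU z B1 B2 (X3 ++ Y3) (e + 1 + 1) lo h (L + 1) *
        UU z B1 B2 (X3 ++ x :: Y3) e (lo - 1) h L =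
      UU z B1 B2 (X3 ++ Y3) (e + 1) lo (h + 1) (L + 1) *
        UU z B1 B2 (X3 ++ x :: Y3) (e + 1) (lo - 1) (h - 1) L := by
  have hsub : ∀ y ∈ X3 ++ Y3, y ∈ X3 ++ x :: Y3 := by
    intro b' hb'
    simp only [List.mem_append, List.mem_cons] at hb' ⊢
    tauto
  have h1 := shift z B1 B2 (X3 ++ Y3) (e + 1) (lo - 1) h L hL hzb (fun y hy => hzf y (hsub y hy))
    (fun b hb y hy => hzz b hb y (hsub y hy))
  have h2 := shift z B1 B2 (X3 ++ x :: Y3) e (lo - 1) h L hL hzb hzf hzz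
  have h3 := shift z B1 B2 (X3 ++ x :: Y3) (e + 1) (lo - 1) (h - 1) L hL hzb hzf hzz
  rw [sub_add_cancel] at h1 h2 h3
  rw [sub_add_cancel] at h3
  have hP : ((X3 ++ x :: Y3).map z).prod = z x * ((X3 ++ Y3).map z).prod := by
    simp
    ring
  have hP0 : ((B1 ++ B2).map z).prod ≠ 0 := by
    apply List.prod_ne_zero
    rw [List.mem_map]
    rintro ⟨b', hb', h0⟩
    exact hzb b' hb' h0
  rw [hP] at h2 h3
  generalize UU z B1 B2 (X3 ++ Y3) (e + 1) (lo - 1) h L = U1 at h1 ⊢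
  generalize UU z B1 B2 (X3 ++ x :: Y3) e (lo - 1) h L = U2 at h2 ⊢
  generalize UU z B1 B2 (X3 ++ x :: Y3) (e + 1) (lo - 1) (h - 1) L = U3 at h3 ⊢
  unfold VV at h1 h2 h3
  unfold UU
  have l1 : (seg (lo - 1) h).length = (h + 1 - lo).toNat + 1 := by
    rw [seg_length]; omega
  have l2 : (seg (lo - 1) (h - 1)).length = (h + 1 - lo).toNat := by
    rw [seg_length]; omega
  have l3 : (X3 ++ x :: Y3).length = (X3 ++ Y3).length + 1 := by
    simp
    omega
  rw [l1] at h1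
  rw [l1, l3] at h2
  rw [l2, l3] at h3
  have cf : ∀ R Z, listDet R ((X3 ++ x :: Y3).map f ++ Z) (EE z) = (-1) ^ X3.length *
      listDet R (f x :: ((X3 ++ Y3).map f ++ Z)) (EE z) := fun R Z => col_f z R [] X3 Y3 x Z
  have ch := fun R => col_hi z R [] (X3 ++ Y3) lo (h + 1) hlo ((seg 1 (L + 1)).map p)
  have ch' := fun R => col_hi z R [f x] (X3 ++ Y3) lo (h + 1) hlo ((seg 1 (L + 1)).map p)
  have rR := fun C => row_R z [] B1 B2 (e + 1) (L + 1) (by omega) C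
  have rR' := fun C => row_R z [e0] B1 B2 (e + 1) (L + 1) (by omega) C
  simp only [List.nil_append, List.cons_append, add_sub_cancel_right] at rR rR' ch ch'
  rw [ch] at h1
  rw [cf, rR', ch'] at h2
  rw [cf] at h3
  rw [cf, rR, rR, ch]
  have key := listDet_DJ e0 (r2 (e + 1)) (B1.map b1 ++ (B2.map b2 ++
    (seg (e + 1 + 1) (L + 1)).map r2)) (f x) (d (h + 1)) ((X3 ++ Y3).map f ++
    ((seg lo h).map d ++ (seg 1 (L + 1)).map p)) (EE z)
  exact alg3 hP0 h1 h2 h3 key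

lemma id4 (z : ι → ℂ) (B1 B2 X3 Y3 : List ι) (x : ι) (e lo h L : ℤ) (he : e + 1 ≤ L)
    (hlo : lo ≤ h) :
    UU z B1 B2 (X3 ++ Y3) (e + 1 + 1) (lo - 1) (h - 1) L *
        UU z B1 B2 (X3 ++ x :: Y3) (e + 1) lo h L -
      UU z B1 B2 (X3 ++ Y3) (e + 1 + 1) lo h L *
        UU z B1 B2 (X3 ++ x :: Y3) (e + 1) (lo - 1) (h - 1) L =
      UU z B1 B2 (X3 ++ Y3) (e + 1) (lo - 1) h L *
        UU z B1 B2 (X3 ++ x :: Y3) (e + 1 + 1) lo (h - 1) L := by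
  unfold UU
  have cf : ∀ R Z, listDet R ((X3 ++ x :: Y3).map f ++ Z) (EE z) = (-1) ^ X3.length *
      listDet R (f x :: ((X3 ++ Y3).map f ++ Z)) (EE z) := fun R Z => col_f z R [] X3 Y3 x Z
  have rR := fun C => row_R z [] B1 B2 (e + 1) L he C
  have ch := fun R => col_hi z R [] (X3 ++ Y3) lo h hlo ((seg 1 L).map p)
  have ch1 := fun R => col_hi z R [f x] (X3 ++ Y3) lo h hlo ((seg 1 L).map p)
  have ch2 := fun R => col_hi z R [d (lo - 1)] (X3 ++ Y3) lo h hlo ((seg 1 L).map p)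
  have cl := fun R => col_lo z R [] (X3 ++ Y3) (lo - 1) (h - 1) (by omega) ((seg 1 L).map p)
  have cl1 := fun R => col_lo z R [f x] (X3 ++ Y3) (lo - 1) (h - 1) (by omega) ((seg 1 L).map p)
  have cl' := fun R => col_lo z R [] (X3 ++ Y3) (lo - 1) h (by omega) ((seg 1 L).map p)
  simp only [List.nil_append, List.cons_append, sub_add_cancel] at rR ch ch1 ch2 cl cl1 cl'
  simp only [cf, rR, ch, ch1, ch2, cl, cl1, cl']
  have key := listDet_P3C (f x) (d (lo - 1)) (d h) ((X3 ++ Y3).map f ++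
    ((seg lo (h - 1)).map d ++ (seg 1 L).map p)) (r2 (e + 1)) (B1.map b1 ++ (B2.map b2 ++
    (seg (e + 1 + 1) L).map r2)) (EE z)
  linear_combination (-((-1) ^ (B1.length + B2.length) * (-1) ^ X3.length *
    (-1) ^ ((X3 ++ Y3).length) * (-1) ^ ((X3 ++ Y3).length + (h - lo).toNat))) * key

end Ids

section Final

variable {ι : Type*}

lemma chi_neg (z : ι → ℂ) (B1 B2 F1 F2 : List ι) (χ : ℤ → ℤ → ℂ)
    (hχ : IsChi z B1 B2 F1 F2 χ) (a s : ℤ) (ha : a < 0) : χ a s = 0 :=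
  hχ.1 a s (Or.inl ha)

lemma chi_ex (z : ι → ℂ) (B1 B2 F1 F2 : List ι) (χ : ℤ → ℤ → ℂ)
    (hχ : IsChi z B1 B2 F1 F2 χ) (hz : ∀ b ∈ B2, z b ≠ 0)
    (hzz : ∀ b ∈ B2, ∀ x ∈ F1 ++ F2, z b - z x ≠ 0)
    (m1 m2 n1 n2 : ℤ) (hm1 : (B1.length : ℤ) = m1) (hm2 : (B2.length : ℤ) = m2)
    (hn1 : (F1.length : ℤ) = n1) (hn2 : (F2.length : ℤ) = n2) :
    ∃ K : ℂ, ∀ a s L c lo hi : ℤ, 0 ≤ a → 0 ≤ L → s + (m1 - n1) ≤ L →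
      m1 - n1 + (m2 - n2) - a ≤ L → c = 1 + (m1 - n1 + (m2 - n2)) - a →
      lo = s + (m1 - n1) + 1 - a → hi = s + (m1 - n1) →
      χ a s = K * (-1 : ℂ) ^ (a * (m1 + n1 + n2)) * UU z B1 B2 (F1 ++ F2) c lo hi L := by
  refine ⟨(-1 : ℂ) ^ ((m1+m2)*(m1+m2-1)/2 + (n1+n2)*(n1+n2-1)/2) /
    Dden z (B1 ++ B2) (F1 ++ F2), ?_⟩
  rintro a s L c lo hi ha hL h1 h2 rfl rfl rfl
  rw [chi_eq z B1 B2 F1 F2 χ hχ hz hzz m1 m2 n1 n2 hm1 hm2 hn1 hn2 a s L ha hL h1 h2, sgn_add]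
  ring

lemma UU_empty (z : ι → ℂ) (B1 B2 F : List ι) (c lo hi lo' hi' L : ℤ) (h : hi < lo)
    (h' : hi' < lo') : UU z B1 B2 F c lo hi L = UU z B1 B2 F c lo' hi' L := by
  unfold UU
  rw [seg_nil h, seg_nil h']

lemma exists_L (x y : ℤ) : ∃ L : ℤ, 0 ≤ L ∧ x ≤ L ∧ y ≤ L :=
  ⟨max 0 (max x y), by omega, by omega, by omega⟩

lemma finalB (z : ι → ℂ) (B1 X2 Y2 F1 F2 : List ι) (b : ι)
    (hzb : ∀ b' ∈ B1 ++ (X2 ++ b :: Y2), z b' ≠ 0) (hzf : ∀ x ∈ F1 ++ F2, z x ≠ 0)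
    (hzz : ∀ b' ∈ B1 ++ (X2 ++ b :: Y2), ∀ x ∈ F1 ++ F2, z b' - z x ≠ 0)
    (χ χb : ℤ → ℤ → ℂ) (hχ : IsChi z B1 (X2 ++ b :: Y2) F1 F2 χ)
    (hχb : IsChi z B1 (X2 ++ Y2) F1 F2 χb) (a s : ℤ) :
    (z b * χ (a + 1) s * χb a s - χ a s * χb (a + 1) s = χ (a + 1) (s + 1) * χb a (s - 1)) ∧
    (χ a (s - 1) * χb a s - χ a s * χb a (s - 1) = χ (a + 1) s * χb (a - 1) (s - 1)) := by
  have hsub : ∀ b' ∈ X2 ++ Y2, b' ∈ B1 ++ (X2 ++ b :: Y2) := by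
    intro b' hb'
    simp only [List.mem_append, List.mem_cons] at hb' ⊢
    tauto
  have hsub2 : ∀ b' ∈ X2 ++ b :: Y2, b' ∈ B1 ++ (X2 ++ b :: Y2) := fun b' hb' =>
    List.mem_append_right _ hb'
  rcases lt_or_ge a 0 with ha | ha
  · have e1 := fun s => chi_neg z _ _ _ _ χ hχ a s ha
    have e2 := fun s => chi_neg z _ _ _ _ χb hχb a s ha
    have e3 := fun s => chi_neg z _ _ _ _ χb hχb (a - 1) s (by omega)
    simp [e1, e2, e3]
  obtain ⟨m1, hm1⟩ : ∃ m1 : ℤ, (B1.length : ℤ) = m1 := ⟨_, rfl⟩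
  obtain ⟨m2, hm2⟩ : ∃ m2 : ℤ, ((X2 ++ b :: Y2).length : ℤ) = m2 := ⟨_, rfl⟩
  obtain ⟨n1, hn1⟩ : ∃ n1 : ℤ, (F1.length : ℤ) = n1 := ⟨_, rfl⟩
  obtain ⟨n2, hn2⟩ : ∃ n2 : ℤ, (F2.length : ℤ) = n2 := ⟨_, rfl⟩
  have hm2' : ((X2 ++ Y2).length : ℤ) = m2 - 1 := by
    rw [← hm2]
    simp only [List.length_append, List.length_cons]
    push_cast
    ring
  obtain ⟨K, hK⟩ := chi_ex z _ _ _ _ χ hχ (fun b' hb' => hzb b' (hsub2 b' hb'))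
    (fun b' hb' => hzz b' (hsub2 b' hb')) m1 m2 n1 n2 hm1 hm2 hn1 hn2
  obtain ⟨Kb, hKb⟩ := chi_ex z _ _ _ _ χb hχb (fun b' hb' => hzb b' (hsub b' hb'))
    (fun b' hb' => hzz b' (hsub b' hb')) m1 (m2 - 1) n1 n2 hm1 hm2' hn1 hn2
  obtain ⟨e, he⟩ : ∃ e : ℤ, e = m1 - n1 + (m2 - n2) - a := ⟨_, rfl⟩
  obtain ⟨h, hh⟩ : ∃ h : ℤ, h = s + (m1 - n1) := ⟨_, rfl⟩
  obtain ⟨L, hL0, hL1, hL2⟩ := exists_L (h + 1) (e + 1)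
  have g1 : (-1 : ℂ) ^ ((a + 1) * (m1 + n1 + n2)) =
      (-1 : ℂ) ^ (a * (m1 + n1 + n2)) * (-1 : ℂ) ^ (m1 + n1 + n2) := by
    rw [← sgn_add]; congr 1; ring
  have g2 : (-1 : ℂ) ^ ((a - 1) * (m1 + n1 + n2)) * (-1 : ℂ) ^ (m1 + n1 + n2) =
      (-1 : ℂ) ^ (a * (m1 + n1 + n2)) := by
    rw [← sgn_add]; congr 1; ring
  constructor
  · have key := id1 z B1 X2 Y2 (F1 ++ F2) b e (h + 1 - a) h L hL0 (by omega) (by omega) hzb hzf hzz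
    rw [hK (a + 1) s L e (h + 1 - a - 1) h (by omega) (by omega) (by omega) (by omega) (by omega)
        (by omega) (by omega),
      hKb a s (L + 1) e (h + 1 - a) h (by omega) (by omega) (by omega) (by omega) (by omega)
        (by omega) (by omega),
      hK a s (L + 1) (e + 1) (h + 1 - a) h (by omega) (by omega) (by omega) (by omega) (by omega)
        (by omega) (by omega),
      hKb (a + 1) s L (e - 1) (h + 1 - a - 1) h (by omega) (by omega) (by omega) (by omega)
        (by omega) (by omega) (by omega),
      hK (a + 1) (s + 1) (L + 1) e (h + 1 - a) (h + 1) (by omega) (by omega) (by omega) (by omega)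
        (by omega) (by omega) (by omega),
      hKb a (s - 1) L e (h + 1 - a - 1) (h - 1) (by omega) (by omega) (by omega) (by omega)
        (by omega) (by omega) (by omega), g1]
    linear_combination (K * Kb * ((-1 : ℂ) ^ (a * (m1 + n1 + n2))) ^ 2 *
      (-1 : ℂ) ^ (m1 + n1 + n2)) * key
  · rw [hK a (s - 1) L (e + 1) (h + 1 - a - 1) (h - 1) (by omega) (by omega) (by omega) (by omega)
        (by omega) (by omega) (by omega),
      hKb a s L e (h + 1 - a) h (by omega) (by omega) (by omega) (by omega) (by omega)
        (by omega) (by omega),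
      hK a s L (e + 1) (h + 1 - a) h (by omega) (by omega) (by omega) (by omega) (by omega)
        (by omega) (by omega),
      hKb a (s - 1) L e (h + 1 - a - 1) (h - 1) (by omega) (by omega) (by omega) (by omega)
        (by omega) (by omega) (by omega)]
    rcases ha.eq_or_lt with rfl | ha
    · rw [chi_neg z _ _ _ _ χb hχb (0 - 1) _ (by omega),
        UU_empty z B1 (X2 ++ Y2) (F1 ++ F2) e (h + 1 - 0 - 1) (h - 1) (h + 1 - 0) h L (by omega)
          (by omega),
        UU_empty z B1 (X2 ++ b :: Y2) (F1 ++ F2) (e + 1) (h + 1 - 0 - 1) (h - 1) (h + 1 - 0) h L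
          (by omega) (by omega)]
      ring
    · have key := id2 z B1 X2 Y2 (F1 ++ F2) b e (h + 1 - a) h L (by omega) (by omega)
      rw [hK (a + 1) s L e (h + 1 - a - 1) h (by omega) (by omega) (by omega) (by omega) (by omega)
          (by omega) (by omega),
        hKb (a - 1) (s - 1) L (e + 1) (h + 1 - a) (h - 1) (by omega) (by omega) (by omega)
          (by omega) (by omega) (by omega) (by omega), g1]
      linear_combination (K * Kb * ((-1 : ℂ) ^ (a * (m1 + n1 + n2))) ^ 2) * key -
        (K * Kb * (-1 : ℂ) ^ (a * (m1 + n1 + n2)) *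
        UU z B1 (X2 ++ b :: Y2) (F1 ++ F2) e (h + 1 - a - 1) h L *
        UU z B1 (X2 ++ Y2) (F1 ++ F2) (e + 1) (h + 1 - a) (h - 1) L) * g2

lemma finalF (z : ι → ℂ) (B1 B2 F1 X3 Y3 : List ι) (x : ι)
    (hzb : ∀ b' ∈ B1 ++ B2, z b' ≠ 0) (hzf : ∀ y ∈ F1 ++ (X3 ++ x :: Y3), z y ≠ 0)
    (hzz : ∀ b' ∈ B1 ++ B2, ∀ y ∈ F1 ++ (X3 ++ x :: Y3), z b' - z y ≠ 0)
    (χ χf : ℤ → ℤ → ℂ) (hχ : IsChi z B1 B2 F1 (X3 ++ x :: Y3) χ)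
    (hχf : IsChi z B1 B2 F1 (X3 ++ Y3) χf) (a s : ℤ) :
    (z x * χf (a + 1) s * χ a s + χf a s * χ (a + 1) s = χf (a + 1) (s + 1) * χ a (s - 1)) ∧
    (χf a (s - 1) * χ a s - χf a s * χ a (s - 1) = -(χf (a + 1) s * χ (a - 1) (s - 1))) := by
  have hsub : ∀ y ∈ F1 ++ (X3 ++ Y3), y ∈ F1 ++ (X3 ++ x :: Y3) := by
    intro b' hb'
    simp only [List.mem_append, List.mem_cons] at hb' ⊢
    tauto
  rcases lt_or_ge a 0 with ha | ha
  · have e1 := fun s => chi_neg z _ _ _ _ χ hχ a s ha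
    have e2 := fun s => chi_neg z _ _ _ _ χf hχf a s ha
    have e3 := fun s => chi_neg z _ _ _ _ χ hχ (a - 1) s (by omega)
    simp [e1, e2, e3]
  obtain ⟨m1, hm1⟩ : ∃ m1 : ℤ, (B1.length : ℤ) = m1 := ⟨_, rfl⟩
  obtain ⟨m2, hm2⟩ : ∃ m2 : ℤ, (B2.length : ℤ) = m2 := ⟨_, rfl⟩
  obtain ⟨n1, hn1⟩ : ∃ n1 : ℤ, (F1.length : ℤ) = n1 := ⟨_, rfl⟩
  obtain ⟨n2, hn2⟩ : ∃ n2 : ℤ, ((X3 ++ x :: Y3).length : ℤ) = n2 := ⟨_, rfl⟩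
  have hn2' : ((X3 ++ Y3).length : ℤ) = n2 - 1 := by
    rw [← hn2]
    simp only [List.length_append, List.length_cons]
    push_cast
    ring
  obtain ⟨K, hK⟩ := chi_ex z _ _ _ _ χ hχ (fun b' hb' => hzb b' (List.mem_append_right _ hb'))
    (fun b' hb' => hzz b' (List.mem_append_right _ hb')) m1 m2 n1 n2 hm1 hm2 hn1 hn2
  obtain ⟨Kf, hKf⟩ := chi_ex z _ _ _ _ χf hχf (fun b' hb' => hzb b' (List.mem_append_right _ hb'))
    (fun b' hb' y hy => hzz b' (List.mem_append_right _ hb') y (hsub y hy))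
    m1 m2 n1 (n2 - 1) hm1 hm2 hn1 hn2'
  rw [← List.append_assoc] at hK hKf hzf hzz
  obtain ⟨e, he⟩ : ∃ e : ℤ, e = m1 - n1 + (m2 - n2) - a := ⟨_, rfl⟩
  obtain ⟨h, hh⟩ : ∃ h : ℤ, h = s + (m1 - n1) := ⟨_, rfl⟩
  obtain ⟨L, hL0, hL1, hL2⟩ := exists_L (h + 1) (e + 1)
  have g1 : (-1 : ℂ) ^ ((a + 1) * (m1 + n1 + n2)) =
      (-1 : ℂ) ^ (a * (m1 + n1 + n2)) * (-1 : ℂ) ^ (m1 + n1 + n2) := by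
    rw [← sgn_add]; congr 1; ring
  have g2 : (-1 : ℂ) ^ ((a - 1) * (m1 + n1 + n2)) * (-1 : ℂ) ^ (m1 + n1 + n2) =
      (-1 : ℂ) ^ (a * (m1 + n1 + n2)) := by
    rw [← sgn_add]; congr 1; ring
  have g3 : (-1 : ℂ) ^ ((a + 1) * (m1 + n1 + (n2 - 1))) =
      -((-1 : ℂ) ^ (a * (m1 + n1 + (n2 - 1))) * (-1 : ℂ) ^ (m1 + n1 + n2)) := by
    have : (-1 : ℂ) ^ (m1 + n1 + n2) = (-1 : ℂ) ^ (m1 + n1 + (n2 - 1)) * (-1 : ℂ) ^ (1 : ℤ) := by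
      rw [← sgn_add]; congr 1; ring
    rw [this, zpow_one, show (a + 1) * (m1 + n1 + (n2 - 1)) =
      a * (m1 + n1 + (n2 - 1)) + (m1 + n1 + (n2 - 1)) by ring, sgn_add]
    ring
  constructor
  · have key := id3 z B1 B2 (F1 ++ X3) Y3 x e (h + 1 - a) h L hL0 (by omega) (by omega) hzb hzf hzz
    rw [hKf (a + 1) s L (e + 1) (h + 1 - a - 1) h (by omega) (by omega) (by omega) (by omega)
        (by omega) (by omega) (by omega),
      hK a s (L + 1) (e + 1) (h + 1 - a) h (by omega) (by omega) (by omega) (by omega) (by omega)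
        (by omega) (by omega),
      hKf a s (L + 1) (e + 1 + 1) (h + 1 - a) h (by omega) (by omega) (by omega) (by omega)
        (by omega) (by omega) (by omega),
      hK (a + 1) s L e (h + 1 - a - 1) h (by omega) (by omega) (by omega) (by omega)
        (by omega) (by omega) (by omega),
      hKf (a + 1) (s + 1) (L + 1) (e + 1) (h + 1 - a) (h + 1) (by omega) (by omega) (by omega)
        (by omega) (by omega) (by omega) (by omega),
      hK a (s - 1) L (e + 1) (h + 1 - a - 1) (h - 1) (by omega) (by omega) (by omega) (by omega)
        (by omega) (by omega) (by omega), g1, g3]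
    linear_combination (-(K * Kf * (-1 : ℂ) ^ (a * (m1 + n1 + n2)) *
      (-1 : ℂ) ^ (a * (m1 + n1 + (n2 - 1))) * (-1 : ℂ) ^ (m1 + n1 + n2))) * key
  · rw [hKf a (s - 1) L (e + 1 + 1) (h + 1 - a - 1) (h - 1) (by omega) (by omega) (by omega)
        (by omega) (by omega) (by omega) (by omega),
      hK a s L (e + 1) (h + 1 - a) h (by omega) (by omega) (by omega) (by omega) (by omega)
        (by omega) (by omega),
      hKf a s L (e + 1 + 1) (h + 1 - a) h (by omega) (by omega) (by omega) (by omega) (by omega)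
        (by omega) (by omega),
      hK a (s - 1) L (e + 1) (h + 1 - a - 1) (h - 1) (by omega) (by omega) (by omega) (by omega)
        (by omega) (by omega) (by omega)]
    rcases ha.eq_or_lt with rfl | ha
    · rw [chi_neg z _ _ _ _ χ hχ (0 - 1) _ (by omega),
        UU_empty z B1 B2 (F1 ++ X3 ++ Y3) (e + 1 + 1) (h + 1 - 0 - 1) (h - 1) (h + 1 - 0) h L
          (by omega) (by omega),
        UU_empty z B1 B2 (F1 ++ X3 ++ x :: Y3) (e + 1) (h + 1 - 0 - 1) (h - 1) (h + 1 - 0) h L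
          (by omega) (by omega)]
      ring
    · have key := id4 z B1 B2 (F1 ++ X3) Y3 x e (h + 1 - a) h L (by omega) (by omega)
      rw [hKf (a + 1) s L (e + 1) (h + 1 - a - 1) h (by omega) (by omega) (by omega) (by omega)
          (by omega) (by omega) (by omega),
        hK (a - 1) (s - 1) L (e + 1 + 1) (h + 1 - a) (h - 1) (by omega) (by omega) (by omega)
          (by omega) (by omega) (by omega) (by omega), g3]
      linear_combination (K * Kf * (-1 : ℂ) ^ (a * (m1 + n1 + n2)) *
        (-1 : ℂ) ^ (a * (m1 + n1 + (n2 - 1)))) * key -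
        (K * Kf * (-1 : ℂ) ^ (a * (m1 + n1 + (n2 - 1))) *
        UU z B1 B2 (F1 ++ X3 ++ Y3) (e + 1) (h + 1 - a - 1) h L *
        UU z B1 B2 (F1 ++ X3 ++ x :: Y3) (e + 1 + 1) (h + 1 - a) (h - 1) L) * g2

end Final


/-- **Left-wing Bäcklund transformations for the Wronskian supercharacters.** -/
theorem backlund_left {ι : Type*} [DecidableEq ι] (z : ι → ℂ) (B1 B2 F1 F2 : List ι)
    (hnd : (B1 ++ B2 ++ F1 ++ F2).Nodup)
    (hz0 : ∀ i ∈ B1 ++ B2 ++ F1 ++ F2, z i ≠ 0)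
    (hzd : ∀ i ∈ B1 ++ B2 ++ F1 ++ F2, ∀ j ∈ B1 ++ B2 ++ F1 ++ F2, i ≠ j → z i ≠ z j)
    (b : ι) (hb : b ∈ B2) (f : ι) (hf : f ∈ F2)
    (χ χb χf : ℤ → ℤ → ℂ)
    (hχ : IsChi z B1 B2 F1 F2 χ)
    (hχb : IsChi z B1 (B2.erase b) F1 F2 χb)
    (hχf : IsChi z B1 B2 F1 (F2.erase f) χf) :
    (∀ a s : ℤ,
      z b * χ (a + 1) s * χb a s - χ a s * χb (a + 1) s = χ (a + 1) (s + 1) * χb a (s - 1)) ∧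
    (∀ a s : ℤ,
      χ a (s - 1) * χb a s - χ a s * χb a (s - 1) = χ (a + 1) s * χb (a - 1) (s - 1)) ∧
    (∀ a s : ℤ,
      z f * χf (a + 1) s * χ a s + χf a s * χ (a + 1) s = χf (a + 1) (s + 1) * χ a (s - 1)) ∧
    (∀ a s : ℤ,
      χf a (s - 1) * χ a s - χf a s * χ a (s - 1) = -(χf (a + 1) s * χ (a - 1) (s - 1))) := by
  obtain ⟨X2, Y2, -, hB2, hB2'⟩ := List.exists_erase_eq hb
  obtain ⟨X3, Y3, -, hF2, hF2'⟩ := List.exists_erase_eq hf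
  have hzb : ∀ b' ∈ B1 ++ B2, z b' ≠ 0 := fun b' hb' => hz0 b' (by
    simp only [List.mem_append] at hb' ⊢; tauto)
  have hzf : ∀ x ∈ F1 ++ F2, z x ≠ 0 := fun x hx => hz0 x (by
    simp only [List.mem_append] at hx ⊢; tauto)
  have hzz : ∀ b' ∈ B1 ++ B2, ∀ x ∈ F1 ++ F2, z b' - z x ≠ 0 := by
    intro b' hb' x hx
    rw [List.append_assoc (B1 ++ B2)] at hnd
    refine sub_ne_zero.2 (hzd b' ?_ x ?_ ?_)
    · simp only [List.mem_append] at hb' ⊢; tauto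
    · simp only [List.mem_append] at hx ⊢; tauto
    · rintro rfl
      exact List.disjoint_of_nodup_append hnd hb' hx
  rw [hB2'] at hχb
  rw [hF2'] at hχf
  have hF := fun a s => finalF z B1 B2 F1 X3 Y3 f hzb (hF2 ▸ hzf) (hF2 ▸ hzz) χ χf (hF2 ▸ hχ) hχf a s
  have hB := fun a s => finalB z B1 X2 Y2 F1 F2 b (hB2 ▸ hzb) hzf (hB2 ▸ hzz) χ χb (hB2 ▸ hχ) hχb a s
  exact ⟨fun a s => (hB a s).1, fun a s => (hB a s).2, fun a s => (hF a s).1,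
    fun a s => (hF a s).2⟩

end Stmt2
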